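/- Let 0<α<1. Then there exists a constant c_α, depending only on α (and on sup_n m_n), such that for every martingale f ∈ H_{1/(1+α)}(G_m) one has ‖ sup_{n∈ℕ} |σ_n^α f| / log^{1+α}(n+1) ‖_{1/(1+α)} ≤ c_α ‖f‖_{H_{1/(1+α)}}, where σ_n^α denotes the n-th (C,α) Cesàro mean of the Vilenkin-Fourier series. -/

import Mathlib

open MeasureTheory Filter Finset Asymptotics
open scoped ENNReal NNReal

noncomputable section

namespace Vilenkin

/-- The Vilenkin group `G_m`: the complete direct product of the cyclic groups `Z_{m_n}`. -/
abbrev G (m : ℕ → ℕ) := ∀ n, ZMod (m n)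

/-- The generalized number system `M_0 = 1`, `M_{n+1} = m_n M_n`. -/
def MM (m : ℕ → ℕ) : ℕ → ℕ
  | 0 => 1
  | n + 1 => m n * MM m n

/-- The generalized Rademacher functions `r_k(x) = exp(2 π i x_k / m_k)`. -/
def rade (m : ℕ → ℕ) (k : ℕ) (x : G m) : ℂ :=
  Complex.exp (2 * Real.pi * Complex.I * ((x k).val : ℂ) / (m k : ℂ))

/-- The Vilenkin system `ψ_n = ∏_k r_k^{n_k}`, where `n = ∑_k n_k M_k` is the expansion of `n`
in the generalized number system (the digits `n_k = (n / M_k) mod m_k` vanish for `k > n`). -/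
def psi (m : ℕ → ℕ) (n : ℕ) (x : G m) : ℂ :=
  ∏ k ∈ Finset.range (n + 1), rade m k x ^ (n / MM m k % m k)

/-- The Dirichlet kernels `D_n = ∑_{k=0}^{n-1} ψ_k`. -/
def D (m : ℕ → ℕ) (n : ℕ) (x : G m) : ℂ := ∑ k ∈ Finset.range n, psi m k x

/-- The Fejér kernels `K_n = (1/n) ∑_{k=1}^{n} D_k`. -/
def K (m : ℕ → ℕ) (n : ℕ) (x : G m) : ℂ := (n : ℂ)⁻¹ * ∑ k ∈ Finset.Icc 1 n, D m k x

/-- `Q_n = ∑_{k=0}^{n-1} q_k`. -/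
def Q (q : ℕ → ℝ) (n : ℕ) : ℝ := ∑ k ∈ Finset.range n, q k

/-- The Nörlund kernels `F_n = (1/Q_n) ∑_{k=1}^{n} q_{n-k} D_k`. -/
def F (m : ℕ → ℕ) (q : ℕ → ℝ) (n : ℕ) (x : G m) : ℂ :=
  ((Q q n : ℝ) : ℂ)⁻¹ * ∑ k ∈ Finset.Icc 1 n, (q (n - k) : ℂ) * D m k x

/-- The interval (cylinder) `I_n(x) = {y : y_j = x_j for all j < n}`. -/
def cyl (m : ℕ → ℕ) (n : ℕ) (x : G m) : Set (G m) := {y | ∀ j < n, y j = x j}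

/-- The element `s_k e_k` of `G_m` (value `s_k` in coordinate `k`, zero elsewhere). -/
def oneSpike (m : ℕ → ℕ) (k sk : ℕ) : G m := fun j => if j = k then (sk : ZMod (m j)) else 0

/-- The element `s_k e_k + s_l e_l` of `G_m` (for `k ≠ l`). -/
def twoSpike (m : ℕ → ℕ) (k sk l sl : ℕ) : G m :=
  fun j => if j = k then (sk : ZMod (m j)) else if j = l then (sl : ZMod (m j)) else 0

/-- The σ-algebra `𝔉_n` generated by the intervals `I_n(x)`, i.e. by the first `n`
coordinates. -/
def filt (m : ℕ → ℕ) (n : ℕ) : MeasurableSpace (G m) :=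
  MeasurableSpace.comap (fun x (i : Fin n) => x i.val) inferInstance

/-- `f = (f^{(n)})` is a martingale with respect to the filtration `(𝔉_n)` and the measure `μ`. -/
def IsMartingale (m : ℕ → ℕ) (μ : Measure (G m)) (f : ℕ → G m → ℂ) : Prop :=
  (∀ n, Integrable (f n) μ) ∧ (∀ n, Measurable[filt m n] (f n)) ∧
    ∀ n, ∀ s : Set (G m), MeasurableSet[filt m n] s →
      ∫ x in s, f (n + 1) x ∂μ = ∫ x in s, f n x ∂μ

/-- The `L_p`-quasinorm `(∫ g^p dμ)^{1/p}` of a nonnegative (extended-real-valued) function. -/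
def lpNormE (m : ℕ → ℕ) (μ : Measure (G m)) (p : ℝ) (g : G m → ℝ≥0∞) : ℝ≥0∞ :=
  (∫⁻ x, g x ^ p ∂μ) ^ (1 / p)

/-- The martingale Hardy space quasinorm `‖f‖_{H_p} = ‖sup_n |f^{(n)}|‖_p`. -/
def HpNorm (m : ℕ → ℕ) (μ : Measure (G m)) (p : ℝ) (f : ℕ → G m → ℂ) : ℝ≥0∞ :=
  lpNormE m μ p (fun x => ⨆ n, (‖f n x‖₊ : ℝ≥0∞))

/-- The Vilenkin-Fourier coefficients of a martingale:
`f̂(i) = lim_k ∫ f^{(k)} conj ψ_i dμ`. -/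
def mcoef (m : ℕ → ℕ) (μ : Measure (G m)) (f : ℕ → G m → ℂ) (i : ℕ) : ℂ :=
  limUnder atTop fun k => ∫ x, f k x * (starRingEnd ℂ) (psi m i x) ∂μ

/-- The partial sums `S_n f = ∑_{k=0}^{n-1} f̂(k) ψ_k` of the Vilenkin-Fourier series of a
martingale. -/
def mS (m : ℕ → ℕ) (μ : Measure (G m)) (f : ℕ → G m → ℂ) (n : ℕ) (x : G m) : ℂ :=
  ∑ k ∈ Finset.range n, mcoef m μ f k * psi m k x

/-- The Nörlund means `t_n f = (1/Q_n) ∑_{k=1}^{n} q_{n-k} S_k f` of a martingale. -/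
def mT (m : ℕ → ℕ) (q : ℕ → ℝ) (μ : Measure (G m)) (f : ℕ → G m → ℂ) (n : ℕ) (x : G m) : ℂ :=
  ((Q q n : ℝ) : ℂ)⁻¹ * ∑ k ∈ Finset.Icc 1 n, (q (n - k) : ℂ) * mS m μ f k x

/-- The Cesàro numbers `A_0^α = 0`, `A_n^α = (α+1)⋯(α+n)/n!`. -/
def AC (α : ℝ) (n : ℕ) : ℝ :=
  if n = 0 then 0 else (∏ j ∈ Finset.Icc 1 n, (α + (j : ℝ))) / (n.factorial : ℝ)

/-- The `(C,α)` (Cesàro) means `σ_n^α f = (1/A_n^α) ∑_{k=1}^{n} A_{n-k}^{α-1} S_k f` of a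
martingale. -/
def mCes (m : ℕ → ℕ) (α : ℝ) (μ : Measure (G m)) (f : ℕ → G m → ℂ) (n : ℕ) (x : G m) : ℂ :=
  ((AC α n : ℝ) : ℂ)⁻¹ * ∑ k ∈ Finset.Icc 1 n, ((AC (α - 1) (n - k) : ℝ) : ℂ) * mS m μ f k x

/-- The Fejér means `σ_n f = (1/n) ∑_{k=1}^{n} S_k f` of a martingale. -/
def mFej (m : ℕ → ℕ) (μ : Measure (G m)) (f : ℕ → G m → ℂ) (n : ℕ) (x : G m) : ℂ :=
  (n : ℂ)⁻¹ * ∑ k ∈ Finset.Icc 1 n, mS m μ f k x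

/-- The Vilenkin-Fourier coefficients of an integrable function. -/
def fcoef (m : ℕ → ℕ) (μ : Measure (G m)) (g : G m → ℂ) (i : ℕ) : ℂ :=
  ∫ x, g x * (starRingEnd ℂ) (psi m i x) ∂μ

/-- The partial sums of the Vilenkin-Fourier series of an integrable function. -/
def fS (m : ℕ → ℕ) (μ : Measure (G m)) (g : G m → ℂ) (n : ℕ) (x : G m) : ℂ :=
  ∑ k ∈ Finset.range n, fcoef m μ g k * psi m k x

/-- The Nörlund means of an integrable function. -/
def fT (m : ℕ → ℕ) (q : ℕ → ℝ) (μ : Measure (G m)) (g : G m → ℂ) (n : ℕ) (x : G m) : ℂ :=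
  ((Q q n : ℝ) : ℂ)⁻¹ * ∑ k ∈ Finset.Icc 1 n, (q (n - k) : ℂ) * fS m μ g k x




/-! ### The number system and the characters -/

lemma MM_pos {m : ℕ → ℕ} (hm : ∀ n, 2 ≤ m n) (n : ℕ) : 0 < MM m n := by
  induction n with
  | zero => simp [MM]
  | succ n ih => simp only [MM]; have := hm n; positivity

lemma MM_dvd {m : ℕ → ℕ} {k l : ℕ} (h : k ≤ l) : MM m k ∣ MM m l := by
  induction l, h using Nat.le_induction with
  | base => exact dvd_rfl
  | succ l _ ih => exact ih.trans (Dvd.intro_left _ rfl)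

lemma MM_mono {m : ℕ → ℕ} (hm : ∀ n, 2 ≤ m n) {k l : ℕ} (h : k ≤ l) : MM m k ≤ MM m l :=
  Nat.le_of_dvd (MM_pos hm l) (MM_dvd h)

lemma two_pow_mul_MM_le {m : ℕ → ℕ} (hm : ∀ n, 2 ≤ m n) {k l : ℕ} (h : k ≤ l) :
    2 ^ (l - k) * MM m k ≤ MM m l := by
  induction l, h using Nat.le_induction with
  | base => simp
  | succ l h ih =>
    rw [Nat.succ_sub h, pow_succ]
    simp only [MM]
    nlinarith [hm l, Nat.mul_le_mul (hm l) ih]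

lemma two_pow_le_MM {m : ℕ → ℕ} (hm : ∀ n, 2 ≤ m n) (n : ℕ) : 2 ^ n ≤ MM m n := by
  simpa [MM] using two_pow_mul_MM_le hm (Nat.zero_le n)

lemma lt_MM {m : ℕ → ℕ} (hm : ∀ n, 2 ≤ m n) (n : ℕ) : n < MM m n :=
  Nat.lt_two_pow_self.trans_le (two_pow_le_MM hm n)

lemma rade_eq (m : ℕ → ℕ) [∀ n, NeZero (m n)] (k : ℕ) (x : G m) :
    rade m k x = ZMod.stdAddChar (x k) := by
  rw [ZMod.stdAddChar_apply, ZMod.toCircle_apply, rade]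

lemma norm_rade (m : ℕ → ℕ) [∀ n, NeZero (m n)] (k : ℕ) (x : G m) : ‖rade m k x‖ = 1 := by
  rw [rade_eq, ZMod.stdAddChar_apply]; exact Circle.norm_coe _

lemma rade_sub (m : ℕ → ℕ) [∀ n, NeZero (m n)] (k : ℕ) (x t : G m) :
    rade m k (x - t) = rade m k x * (starRingEnd ℂ) (rade m k t) := by
  rw [rade_eq, rade_eq, rade_eq, Pi.sub_apply, AddChar.map_sub_eq_div, div_eq_mul_inv]
  congr 1
  rw [ZMod.stdAddChar_apply]
  rw [← Circle.coe_inv_eq_conj, Circle.coe_inv]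

lemma rade_geom (m : ℕ → ℕ) [∀ n, NeZero (m n)] (k : ℕ) (x : G m) (h : x k ≠ 0) :
    ∑ c ∈ range (m k), rade m k x ^ c = 0 := by
  have h1 : rade m k x ≠ 1 := by
    rw [rade_eq]
    intro h'
    exact h (ZMod.injective_stdAddChar (by rw [h', AddChar.map_zero_eq_one]))
  have h2 : rade m k x ^ (m k) = 1 := by
    rw [rade_eq, ← AddChar.map_nsmul_eq_pow]; simp
  have := geom_sum_mul (rade m k x) (m k)
  rw [h2, sub_self] at this
  exact (mul_eq_zero.mp this).resolve_right (sub_ne_zero.mpr h1)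

lemma norm_psi (m : ℕ → ℕ) [∀ n, NeZero (m n)] (n : ℕ) (x : G m) : ‖psi m n x‖ = 1 := by
  simp [psi, norm_prod, norm_rade]

lemma psi_sub (m : ℕ → ℕ) [∀ n, NeZero (m n)] (n : ℕ) (x t : G m) :
    psi m n (x - t) = psi m n x * (starRingEnd ℂ) (psi m n t) := by
  simp [psi, rade_sub, map_prod, mul_pow, prod_mul_distrib]

lemma psi_eq {m : ℕ → ℕ} (hm : ∀ n, 2 ≤ m n) {n J : ℕ} (h : n < MM m J) (x : G m) :
    psi m n x = ∏ k ∈ range J, rade m k x ^ (n / MM m k % m k) := by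
  have key : ∀ J', n < MM m J' → ∀ L, J' ≤ L →
      ∏ k ∈ range J', rade m k x ^ (n / MM m k % m k)
        = ∏ k ∈ range L, rade m k x ^ (n / MM m k % m k) := by
    intro J' hJ' L hL
    refine prod_subset (range_mono hL) ?_
    intro k _ hk
    have hk : J' ≤ k := by simpa using hk
    rw [Nat.div_eq_of_lt (hJ'.trans_le (MM_mono hm hk))]; simp
  rw [psi, key (n + 1) ((Nat.lt_succ_self n).trans (lt_MM hm _)) _ (le_max_left (n + 1) J),
    key J h _ (le_max_right (n + 1) J)]

lemma digit_low {m : ℕ → ℕ} (hm : ∀ n, 2 ≤ m n) {k L : ℕ} (h : k < L) (u v : ℕ) :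
    (u + MM m L * v) / MM m k % m k = u / MM m k % m k := by
  obtain ⟨c, hc⟩ : MM m (k + 1) ∣ MM m L := MM_dvd h
  rw [hc]
  simp only [MM]
  rw [show u + m k * MM m k * c * v = u + MM m k * (m k * (c * v)) by ring,
    Nat.add_mul_div_left _ _ (MM_pos hm k), Nat.add_mul_mod_self_left]

lemma digit_high {m : ℕ → ℕ} (hm : ∀ n, 2 ≤ m n) {k L : ℕ} (h : L ≤ k) {u : ℕ} (v : ℕ)
    (hu : u < MM m L) :
    (u + MM m L * v) / MM m k % m k = MM m L * v / MM m k % m k := by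
  obtain ⟨c, hc⟩ : MM m L ∣ MM m k := MM_dvd h
  rw [hc, ← Nat.div_div_eq_div_mul, ← Nat.div_div_eq_div_mul,
    Nat.add_mul_div_left _ _ (MM_pos hm L), Nat.div_eq_of_lt hu, Nat.zero_add,
    Nat.mul_div_cancel_left _ (MM_pos hm L)]

lemma psi_add {m : ℕ → ℕ} (hm : ∀ n, 2 ≤ m n) {L u : ℕ} (v : ℕ) (hu : u < MM m L) (x : G m) :
    psi m (u + MM m L * v) x = psi m u x * psi m (MM m L * v) x := by
  have h0 := lt_MM hm (u + MM m L * v)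
  rw [psi_eq hm h0, psi_eq hm (lt_of_le_of_lt (Nat.le_add_right u _) h0),
    psi_eq hm (lt_of_le_of_lt (Nat.le_add_left _ u) h0), ← prod_mul_distrib]
  refine prod_congr rfl fun k _ => ?_
  rw [← pow_add]
  congr 1
  rcases lt_or_ge k L with h | h
  · rw [digit_low hm h]
    have := digit_low hm h 0 v
    simp only [Nat.zero_add, Nat.zero_div, Nat.zero_mod] at this
    rw [this, Nat.add_zero]
  · rw [digit_high hm h v hu, Nat.div_eq_of_lt (hu.trans_le (MM_mono hm h))]
    simp

lemma psi_MM_mul {m : ℕ → ℕ} (hm : ∀ n, 2 ≤ m n) {l c : ℕ} (hc : c < m l) (x : G m) :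
    psi m (MM m l * c) x = rade m l x ^ c := by
  have h : MM m l * c < MM m (l + 1) := by
    simp only [MM]; rw [mul_comm (m l)]; exact Nat.mul_lt_mul_of_pos_left hc (MM_pos hm l)
  rw [psi_eq hm h, prod_range_succ, Nat.mul_div_cancel_left _ (MM_pos hm l), Nat.mod_eq_of_lt hc]
  rw [prod_eq_one, one_mul]
  intro k hk
  have := digit_low hm (mem_range.mp hk) 0 c
  simp only [Nat.zero_add, Nat.zero_div, Nat.zero_mod] at this
  rw [this, pow_zero]

/-! ### Dirichlet kernels -/

lemma norm_D_le (m : ℕ → ℕ) [∀ n, NeZero (m n)] (n : ℕ) (x : G m) : ‖D m n x‖ ≤ n := by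
  refine (norm_sum_le _ _).trans ?_
  simp [norm_psi]

lemma D_add {m : ℕ → ℕ} (hm : ∀ n, 2 ≤ m n) {L u : ℕ} (v : ℕ) (hu : u ≤ MM m L) (x : G m) :
    D m (MM m L * v + u) x = D m (MM m L * v) x + psi m (MM m L * v) x * D m u x := by
  rw [D, sum_range_add, D, D, mul_sum]
  congr 1
  refine sum_congr rfl fun i hi => ?_
  rw [add_comm, psi_add hm v ((mem_range.mp hi).trans_le hu), mul_comm]

lemma D_MM_succ {m : ℕ → ℕ} [∀ n, NeZero (m n)] (hm : ∀ n, 2 ≤ m n) {l : ℕ} {x : G m}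
    (h : x l ≠ 0) : D m (MM m (l + 1)) x = 0 := by
  have key : ∀ c, c ≤ m l →
      D m (MM m l * c) x = D m (MM m l) x * ∑ c' ∈ range c, rade m l x ^ c' := by
    intro c
    induction c with
    | zero => intro _; simp [D]
    | succ c ih =>
      intro hc
      rw [Nat.mul_succ, D_add hm c le_rfl, ih (by omega), psi_MM_mul hm (by omega),
        sum_range_succ]
      ring
  have := key (m l) le_rfl
  rw [rade_geom m l x h, mul_zero, mul_comm] at this
  exact this

lemma D_MM_mul {m : ℕ → ℕ} [∀ n, NeZero (m n)] (hm : ∀ n, 2 ≤ m n) {l : ℕ} {x : G m}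
    (h : x l ≠ 0) (v : ℕ) : D m (MM m (l + 1) * v) x = 0 := by
  induction v with
  | zero => simp [D]
  | succ v ih => rw [Nat.mul_succ, D_add hm v le_rfl, ih, D_MM_succ hm h]; simp

lemma D_of_dvd {m : ℕ → ℕ} [∀ n, NeZero (m n)] (hm : ∀ n, 2 ≤ m n) {l : ℕ} {x : G m}
    (h : x l ≠ 0) {n : ℕ} (hn : MM m (l + 1) ∣ n) : D m n x = 0 := by
  obtain ⟨v, rfl⟩ := hn
  exact D_MM_mul hm h v

lemma norm_D_le_MM {m : ℕ → ℕ} [∀ n, NeZero (m n)] (hm : ∀ n, 2 ≤ m n) {l : ℕ} {x : G m}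
    (h : x l ≠ 0) (n : ℕ) : ‖D m n x‖ ≤ MM m (l + 1) := by
  have hu := (Nat.mod_lt n (MM_pos hm (l + 1))).le
  rw [← Nat.div_add_mod n (MM m (l + 1)), D_add hm _ hu, D_MM_mul hm h, zero_add, norm_mul,
    norm_psi, one_mul]
  exact (norm_D_le m _ x).trans (by exact_mod_cast hu)

/-- Sums of Dirichlet kernels. -/
def PD (m : ℕ → ℕ) (n : ℕ) (x : G m) : ℂ := ∑ k ∈ range n, D m k x

lemma PD_add {m : ℕ → ℕ} [∀ n, NeZero (m n)] (hm : ∀ n, 2 ≤ m n) {l L : ℕ} (hl : l < L)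
    {x : G m} (h : x l ≠ 0) {u : ℕ} (v : ℕ) (hu : u ≤ MM m L) :
    PD m (MM m L * v + u) x = PD m (MM m L * v) x + psi m (MM m L * v) x * PD m u x := by
  rw [PD, sum_range_add, PD, PD, mul_sum]
  congr 1
  refine sum_congr rfl fun i hi => ?_
  rw [D_add hm v ((mem_range.mp hi).le.trans hu),
    D_of_dvd hm h (Dvd.dvd.mul_right (MM_dvd hl) v), zero_add]

lemma PD_MM_succ {m : ℕ → ℕ} [∀ n, NeZero (m n)] (hm : ∀ n, 2 ≤ m n) {l k : ℕ} (hl : l < k)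
    {x : G m} (h : x l ≠ 0) (hk : x k ≠ 0) : PD m (MM m (k + 1)) x = 0 := by
  have key : ∀ c, c ≤ m k →
      PD m (MM m k * c) x = PD m (MM m k) x * ∑ c' ∈ range c, rade m k x ^ c' := by
    intro c
    induction c with
    | zero => intro _; simp [PD]
    | succ c ih =>
      intro hc
      rw [Nat.mul_succ, PD_add hm hl h c le_rfl, ih (by omega), psi_MM_mul hm (by omega),
        sum_range_succ]
      ring
  have := key (m k) le_rfl
  rw [rade_geom m k x hk, mul_zero, mul_comm] at this
  exact this

lemma norm_PD_le {m : ℕ → ℕ} [∀ n, NeZero (m n)] (hm : ∀ n, 2 ≤ m n) {l k : ℕ} (hl : l < k)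
    {x : G m} (h : x l ≠ 0) (hk : x k ≠ 0) (n : ℕ) :
    ‖PD m n x‖ ≤ MM m (k + 1) * MM m (l + 1) := by
  have hz : ∀ v, PD m (MM m (k + 1) * v) x = 0 := by
    intro v
    induction v with
    | zero => simp [PD]
    | succ v ih =>
      rw [Nat.mul_succ, PD_add hm (by omega) h v le_rfl, ih, PD_MM_succ hm hl h hk]; simp
  have hu := (Nat.mod_lt n (MM_pos hm (k + 1))).le
  rw [← Nat.div_add_mod n (MM m (k + 1)), PD_add hm (by omega) h _ hu, hz, zero_add, norm_mul,
    norm_psi, one_mul, PD]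
  refine (norm_sum_le _ _).trans ((sum_le_sum fun i _ => norm_D_le_MM hm h i).trans ?_)
  simp only [sum_const, card_range, nsmul_eq_mul]
  gcongr


/-! ### Cesàro numbers -/

lemma AC_zero (a : ℝ) : AC a 0 = 0 := by simp [AC]

lemma AC_one (a : ℝ) : AC a 1 = a + 1 := by simp [AC]

lemma AC_succ (a : ℝ) {n : ℕ} (hn : 1 ≤ n) :
    AC a (n + 1) = AC a n * ((a + (n + 1)) / (n + 1)) := by
  have h0 : n ≠ 0 := by omega
  simp only [AC, h0, if_false, Nat.succ_ne_zero]
  rw [prod_Icc_succ_top (by omega), Nat.factorial_succ]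
  push_cast
  have : (n.factorial : ℝ) ≠ 0 := by exact_mod_cast n.factorial_ne_zero
  field_simp

lemma AC_lower {α : ℝ} (h0 : 0 < α) (h1 : α < 1) {n : ℕ} (hn : 1 ≤ n) :
    ((n : ℝ) + 1) ^ α ≤ AC α n := by
  induction n, hn using Nat.le_induction with
  | base =>
    rw [AC_one]
    have := rpow_one_add_le_one_add_mul_self (s := 1) (by norm_num) h0.le h1.le
    push_cast
    linarith
  | succ n hn ih =>
    rw [AC_succ α hn]
    have hb := rpow_one_add_le_one_add_mul_self (s := 1 / ((n : ℝ) + 1))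
      (by have : 0 ≤ 1 / ((n : ℝ) + 1) := by positivity
          linarith) h0.le h1.le
    have e : ((n + 1 : ℕ) : ℝ) + 1 = ((n : ℝ) + 1) * (1 + 1 / ((n : ℝ) + 1)) := by
      push_cast; field_simp
    rw [e, Real.mul_rpow (by positivity) (by positivity)]
    refine mul_le_mul ih (hb.trans (le_of_eq ?_)) (by positivity) ?_
    · field_simp; ring
    · exact le_trans (by positivity) ih

lemma AC_upper {α : ℝ} (h0 : 0 < α) (h1 : α < 1) {n : ℕ} (hn : 1 ≤ n) :
    AC α n ≤ 2 * (n : ℝ) ^ α := by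
  induction n, hn using Nat.le_induction with
  | base => rw [AC_one]; simp; linarith
  | succ n hn ih =>
    rw [AC_succ α hn]
    have hb := rpow_one_add_le_one_add_mul_self (s := -(1 / ((n : ℝ) + 1)))
      (by have : 1 / ((n : ℝ) + 1) ≤ 1 := by
            rw [div_le_one (by positivity)]; linarith [Nat.cast_nonneg (α := ℝ) n]
          linarith) h0.le h1.le
    have e : (n : ℝ) = ((n + 1 : ℕ) : ℝ) * (1 + -(1 / ((n : ℝ) + 1))) := by
      push_cast; field_simp; ring
    have hpos : (0 : ℝ) ≤ 1 + -(1 / ((n : ℝ) + 1)) := by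
      have : 1 / ((n : ℝ) + 1) ≤ 1 := by
        rw [div_le_one (by positivity)]; linarith [Nat.cast_nonneg (α := ℝ) n]
      linarith
    have e2 : (n : ℝ) ^ α ≤ ((n + 1 : ℕ) : ℝ) ^ α * (1 + α * -(1 / ((n : ℝ) + 1))) := by
      conv_lhs => rw [e]
      rw [Real.mul_rpow (by positivity) hpos]
      gcongr
    have hf : 0 ≤ (α + ((n : ℝ) + 1)) / ((n : ℝ) + 1) := by positivity
    calc AC α n * ((α + (n + 1)) / (n + 1))
        ≤ (2 * (((n + 1 : ℕ) : ℝ) ^ α * (1 + α * -(1 / ((n : ℝ) + 1))))) *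
          ((α + (n + 1)) / (n + 1)) :=
          mul_le_mul_of_nonneg_right (ih.trans (by linarith)) hf
      _ = 2 * ((n + 1 : ℕ) : ℝ) ^ α *
          ((1 + α * -(1 / ((n : ℝ) + 1))) * ((α + (n + 1)) / (n + 1))) := by ring
      _ ≤ 2 * ((n + 1 : ℕ) : ℝ) ^ α * 1 := by
          refine mul_le_mul_of_nonneg_left ?_ (by positivity)
          have : (1 + α * -(1 / ((n : ℝ) + 1))) * ((α + (n + 1)) / (n + 1))
            = 1 - (α / (n + 1)) ^ 2 := by field_simp; ring
          rw [this]; nlinarith [sq_nonneg (α / ((n : ℝ) + 1))]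
      _ = _ := by ring

lemma AC_pos {α : ℝ} (h0 : 0 < α) (h1 : α < 1) {n : ℕ} (hn : 1 ≤ n) : 0 < AC α n :=
  lt_of_lt_of_le (by positivity) (AC_lower h0 h1 hn)

lemma AC_nonneg {α : ℝ} (h0 : 0 < α) (h1 : α < 1) (n : ℕ) : 0 ≤ AC α n := by
  rcases Nat.eq_zero_or_pos n with rfl | h
  · rw [AC_zero]
  · exact (AC_pos h0 h1 h).le

lemma AC_q {α : ℝ} (h0 : 0 < α) {n : ℕ} (hn : 1 ≤ n) :
    AC (α - 1) n = α / (α + n) * AC α n := by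
  induction n, hn using Nat.le_induction with
  | base => rw [AC_one, AC_one]; push_cast; field_simp; ring
  | succ n hn ih =>
    rw [AC_succ _ hn, AC_succ _ hn, ih]
    push_cast
    have : α + n ≠ 0 := by positivity
    have : α + (n + 1) ≠ 0 := by positivity
    field_simp
    ring

lemma AC_mono {α : ℝ} (h0 : 0 < α) (h1 : α < 1) : Monotone (AC α) := by
  refine monotone_nat_of_le_succ fun n => ?_
  rcases Nat.eq_zero_or_pos n with rfl | h
  · rw [AC_zero]; exact AC_nonneg h0 h1 _
  · rw [AC_succ α h]
    refine le_mul_of_one_le_right (AC_nonneg h0 h1 _) ?_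
    rw [one_le_div (by positivity)]; linarith

lemma q_nonneg {α : ℝ} (h0 : 0 < α) (h1 : α < 1) (n : ℕ) : 0 ≤ AC (α - 1) n := by
  rcases Nat.eq_zero_or_pos n with rfl | h
  · rw [AC_zero]
  · rw [AC_q h0 h]; have := AC_nonneg h0 h1 n; positivity

lemma q_anti {α : ℝ} (h0 : 0 < α) (h1 : α < 1) {n : ℕ} (hn : 1 ≤ n) :
    AC (α - 1) (n + 1) ≤ AC (α - 1) n := by
  rw [AC_succ _ hn]
  refine mul_le_of_le_one_right (q_nonneg h0 h1 n) ?_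
  rw [div_le_one (by positivity)]; linarith

lemma mul_q_le {α : ℝ} (h0 : 0 < α) (h1 : α < 1) {n : ℕ} (hn : 1 ≤ n) :
    n * AC (α - 1) n ≤ AC α n := by
  rw [AC_q h0 hn, ← mul_assoc]
  refine mul_le_of_le_one_left (AC_nonneg h0 h1 n) ?_
  rw [← mul_div_assoc, div_le_one (by positivity)]
  nlinarith [Nat.cast_nonneg (α := ℝ) n]

lemma sum_q_le {α : ℝ} (h0 : 0 < α) (h1 : α < 1) (n : ℕ) :
    ∑ j ∈ range n, AC (α - 1) j ≤ AC α n := by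
  have key : ∑ j ∈ range (n + 1), AC (α - 1) j ≤ AC α n := by
    induction n with
    | zero => simp [AC_zero]
    | succ n ih =>
      rw [sum_range_succ]
      rcases Nat.eq_zero_or_pos n with rfl | h
      · simp [AC_zero, AC_one]
      · have : AC (α - 1) (n + 1) = α / (n + 1) * AC α n := by
          rw [AC_q h0 (by omega), AC_succ _ h]
          push_cast
          have : α + (n + 1) ≠ 0 := by positivity
          field_simp
        rw [this, AC_succ _ h]
        have e : AC α n * ((α + (n + 1)) / (n + 1)) = AC α n + α / (n + 1) * AC α n := by
          field_simp; ring
        linarith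
  refine le_trans ?_ key
  rw [sum_range_succ]
  linarith [q_nonneg h0 h1 n]

/-! ### The Cesàro kernel -/

/-- The unnormalized Cesàro kernel. -/
def Phi (m : ℕ → ℕ) (α : ℝ) (n : ℕ) (x : G m) : ℂ :=
  ∑ k ∈ Icc 1 n, ((AC (α - 1) (n - k) : ℝ) : ℂ) * D m k x

lemma Phi_eq (m : ℕ → ℕ) (α : ℝ) (n : ℕ) (x : G m) :
    Phi m α n x = ∑ j ∈ range n, ((AC (α - 1) j : ℝ) : ℂ) * D m (n - j) x := by
  refine sum_nbij' (fun k => n - k) (fun j => n - j) ?_ ?_ ?_ ?_ ?_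
  · intro k hk; simp at hk ⊢; omega
  · intro k hk; simp at hk ⊢; omega
  · intro k hk; simp at hk ⊢; omega
  · intro k hk; simp at hk ⊢; omega
  · intro k hk
    simp at hk
    rw [Nat.sub_sub_self hk.2]

lemma norm_sum_q_le {α : ℝ} (h0 : 0 < α) (h1 : α < 1) (n : ℕ) (d : ℕ → ℂ) {X : ℝ}
    (hX : 0 ≤ X) (hd : ∀ j, j < n → ‖d j‖ ≤ X) :
    ‖∑ j ∈ range n, ((AC (α - 1) j : ℝ) : ℂ) * d j‖ ≤ X * AC α n := by
  calc _ ≤ ∑ j ∈ range n, AC (α - 1) j * X := by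
        refine (norm_sum_le _ _).trans (sum_le_sum fun j hj => ?_)
        rw [norm_mul, Complex.norm_real, Real.norm_of_nonneg (q_nonneg h0 h1 j)]
        exact mul_le_mul_of_nonneg_left (hd j (mem_range.mp hj)) (q_nonneg h0 h1 j)
    _ = X * ∑ j ∈ range n, AC (α - 1) j := by rw [← sum_mul, mul_comm]
    _ ≤ _ := mul_le_mul_of_nonneg_left (sum_q_le h0 h1 n) hX

lemma Phi_le_a {m : ℕ → ℕ} [∀ n, NeZero (m n)] {α : ℝ} (h0 : 0 < α)
    (h1 : α < 1) (n : ℕ) (x : G m) : ‖Phi m α n x‖ ≤ n * AC α n := by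
  rw [Phi_eq]
  refine norm_sum_q_le h0 h1 n _ (by positivity) fun j _ => ?_
  exact (norm_D_le m _ x).trans (by exact_mod_cast Nat.sub_le n j)

lemma Phi_le_b {m : ℕ → ℕ} [∀ n, NeZero (m n)] (hm : ∀ n, 2 ≤ m n) {α : ℝ} (h0 : 0 < α)
    (h1 : α < 1) (n : ℕ) {x : G m} {l : ℕ} (h : x l ≠ 0) :
    ‖Phi m α n x‖ ≤ MM m (l + 1) * AC α n := by
  rw [Phi_eq]
  exact norm_sum_q_le h0 h1 n _ (by positivity) fun j _ => norm_D_le_MM hm h _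

lemma abel_bound (q : ℕ → ℝ) (hq : Antitone q) (hq0 : ∀ n, 0 ≤ q n) (b : ℕ → ℂ) {X : ℝ} (T : ℕ)
    (hb : ∀ t, t ≤ T → ‖∑ j ∈ range t, b j‖ ≤ X) :
    ‖∑ j ∈ range T, (q j : ℂ) * b j‖ ≤ q 0 * X := by
  have key : ∀ t, t ≤ T → ‖∑ j ∈ range t, (q j : ℂ) * b j - q t * ∑ j ∈ range t, b j‖
      ≤ (q 0 - q t) * X := by
    intro t
    induction t with
    | zero => simp
    | succ t ih =>
      intro ht
      have e : ∑ j ∈ range (t + 1), (q j : ℂ) * b j - q (t + 1) * ∑ j ∈ range (t + 1), b j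
        = (∑ j ∈ range t, (q j : ℂ) * b j - q t * ∑ j ∈ range t, b j)
          + ((q t - q (t + 1) : ℝ) : ℂ) * ∑ j ∈ range (t + 1), b j := by
        rw [sum_range_succ, sum_range_succ]; push_cast; ring
      rw [e]
      refine (norm_add_le _ _).trans ?_
      have hd : 0 ≤ q t - q (t + 1) := sub_nonneg.mpr (hq (Nat.le_succ t))
      have h2 : ‖((q t - q (t + 1) : ℝ) : ℂ) * ∑ j ∈ range (t + 1), b j‖
          ≤ (q t - q (t + 1)) * X := by
        rw [norm_mul, Complex.norm_real, Real.norm_of_nonneg hd]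
        exact mul_le_mul_of_nonneg_left (hb _ ht) hd
      have := ih (by omega)
      nlinarith
  have h1 := key T le_rfl
  have h2 : ‖(q T : ℂ) * ∑ j ∈ range T, b j‖ ≤ q T * X := by
    rw [norm_mul, Complex.norm_real, Real.norm_of_nonneg (hq0 T)]
    exact mul_le_mul_of_nonneg_left (hb _ le_rfl) (hq0 T)
  calc _ = ‖(∑ j ∈ range T, (q j : ℂ) * b j - q T * ∑ j ∈ range T, b j)
            + q T * ∑ j ∈ range T, b j‖ := by rw [sub_add_cancel]
    _ ≤ _ := norm_add_le _ _
    _ ≤ _ := by linarith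

lemma Phi_le_c {m : ℕ → ℕ} [∀ n, NeZero (m n)] (hm : ∀ n, 2 ≤ m n) {B : ℕ} (hB : ∀ n, m n ≤ B)
    {α : ℝ} (h0 : 0 < α)
    (h1 : α < 1) (n : ℕ) {x : G m} {l k : ℕ} (hlk : l < k) (h : x l ≠ 0) (hk : x k ≠ 0) :
    ‖Phi m α n x‖ ≤ (1 + 2 * B) * (MM m (l + 1) * AC α (MM m k)) := by
  set J := MM m k with hJ
  have hJ1 : 1 ≤ J := MM_pos hm k
  have hA := AC_nonneg h0 h1 J
  have hpos : (0 : ℝ) ≤ 2 * B * (MM m (l + 1) * AC α J) := by positivity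
  rcases le_total n J with hn | hn
  · refine (Phi_le_b hm h0 h1 n h).trans ?_
    have : (MM m (l + 1) : ℝ) * AC α n ≤ MM m (l + 1) * AC α J :=
      mul_le_mul_of_nonneg_left (AC_mono h0 h1 hn) (by positivity)
    nlinarith
  · obtain ⟨T, rfl⟩ := Nat.exists_eq_add_of_le hn
    rw [Phi_eq, sum_range_add]
    refine (norm_add_le _ _).trans ?_
    have p1 : ‖∑ j ∈ range J, ((AC (α - 1) j : ℝ) : ℂ) * D m (J + T - j) x‖
        ≤ MM m (l + 1) * AC α J :=
      norm_sum_q_le h0 h1 J _ (by positivity) fun j _ => norm_D_le_MM hm h _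
    have hs : ∀ t, t ≤ T → ∑ j ∈ range t, D m (J + T - (J + j)) x
        = PD m (T + 1) x - PD m (T + 1 - t) x := by
      intro t
      induction t with
      | zero => simp
      | succ t ih =>
        intro ht
        have e : T + 1 - t = (T + 1 - (t + 1)) + 1 := by omega
        have e2 : J + T - (J + t) = T + 1 - (t + 1) := by omega
        rw [sum_range_succ, ih (by omega), e, e2, PD, PD, PD, sum_range_succ _ (T + 1 - (t + 1))]
        ring
    have p2 := abel_bound (fun j => AC (α - 1) (J + j))
      (antitone_nat_of_succ_le fun j => q_anti h0 h1 (hJ1.trans (Nat.le_add_right J j))) (fun j => q_nonneg h0 h1 _)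
      (fun j => D m (J + T - (J + j)) x) (X := 2 * (MM m (k + 1) * MM m (l + 1))) T (by
        intro t ht
        rw [hs t ht]
        refine (norm_sub_le _ _).trans ?_
        linarith [norm_PD_le hm hlk h hk (T + 1), norm_PD_le hm hlk h hk (T + 1 - t)])
    have p3 : AC (α - 1) (J + 0) * (2 * ((MM m (k + 1) : ℝ) * MM m (l + 1)))
        ≤ 2 * B * (MM m (l + 1) * AC α J) := by
      have hq := mul_q_le h0 h1 hJ1
      have hM : (MM m (k + 1) : ℝ) ≤ B * J := by
        simp only [MM]; push_cast; gcongr; exact hB k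
      have hq0 := q_nonneg h0 h1 J
      calc AC (α - 1) (J + 0) * (2 * ((MM m (k + 1) : ℝ) * MM m (l + 1)))
          ≤ AC (α - 1) J * (2 * ((B * J) * MM m (l + 1))) := by
            rw [Nat.add_zero]; gcongr
        _ = 2 * B * (MM m (l + 1) * (J * AC (α - 1) J)) := by ring
        _ ≤ _ := by gcongr
    have := p2.trans p3
    linarith


/-! ### Cylinders and functions of finitely many coordinates -/

/-- `g` depends only on the first `n` coordinates. -/
def Dep {m : ℕ → ℕ} {β : Type*} (n : ℕ) (g : G m → β) : Prop :=
  ∀ x y : G m, (∀ j < n, x j = y j) → g x = g y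

lemma Dep.mono {m : ℕ → ℕ} {β : Type*} {n k : ℕ} {g : G m → β} (h : Dep n g) (hk : n ≤ k) :
    Dep k g := fun x y hxy => h x y fun j hj => hxy j (hj.trans_le hk)

/-- Truncation to the first `n` coordinates. -/
def trunc {m : ℕ → ℕ} (n : ℕ) (x : G m) : G m := fun j => if j < n then x j else 0

lemma trunc_apply {m : ℕ → ℕ} {n : ℕ} (x : G m) {j : ℕ} (h : j < n) : trunc n x j = x j := by
  simp [trunc, h]

lemma trunc_congr {m : ℕ → ℕ} {n : ℕ} {x y : G m} (h : ∀ j < n, x j = y j) :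
    trunc n x = trunc n y := by
  funext j
  simp only [trunc]
  split_ifs with hj
  · exact h j hj
  · rfl

lemma Dep.on_trunc {m : ℕ → ℕ} {β : Type*} {n : ℕ} {g : G m → β} (h : Dep n g) (x : G m) :
    g (trunc n x) = g x := h _ _ fun _ hj => trunc_apply x hj

open Classical in
/-- A set of representatives of the cylinders of level `n`. -/
def R (m : ℕ → ℕ) [∀ n, NeZero (m n)] : ℕ → Finset (G m)
  | 0 => {0}
  | n + 1 => (R m n ×ˢ (univ : Finset (ZMod (m n)))).image fun p => Function.update p.1 n p.2

section reps
set_option linter.unusedSectionVars false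
variable {m : ℕ → ℕ} [∀ n, NeZero (m n)]

lemma trunc_of_mem_R {n : ℕ} {y : G m} (h : y ∈ R m n) : trunc n y = y := by
  induction n generalizing y with
  | zero =>
    simp only [R, mem_singleton] at h
    subst h
    funext j; simp [trunc]
  | succ n ih =>
    simp only [R, mem_image, mem_product, mem_univ, and_true, Prod.exists] at h
    obtain ⟨z, s, hz, rfl⟩ := h
    funext j
    by_cases hj : j < n + 1
    · rw [trunc_apply _ hj]
    · have hjn : j ≠ n := by omega
      have := congrFun (ih hz) j
      simp only [trunc, if_neg (show ¬ j < n by omega)] at this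
      simp [trunc, hj, Function.update_of_ne hjn, ← this]

lemma trunc_mem_R (n : ℕ) (x : G m) : trunc n x ∈ R m n := by
  induction n with
  | zero =>
    simp only [R, mem_singleton]
    funext j; simp [trunc]
  | succ n ih =>
    simp only [R, mem_image, mem_product, mem_univ, and_true, Prod.exists]
    refine ⟨trunc n x, x n, ih, ?_⟩
    funext j
    rcases lt_trichotomy j n with h | rfl | h
    · rw [Function.update_of_ne h.ne, trunc_apply _ h, trunc_apply _ (by omega)]
    · rw [Function.update_self, trunc_apply _ (by omega)]
    · rw [Function.update_of_ne h.ne']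
      simp [trunc, show ¬ j < n by omega, show ¬ j < n + 1 by omega]

lemma eq_of_mem_R {n : ℕ} {y z : G m} (hy : y ∈ R m n) (hz : z ∈ R m n)
    (h : ∀ j < n, y j = z j) : y = z := by
  rw [← trunc_of_mem_R hy, ← trunc_of_mem_R hz, trunc_congr h]

lemma sum_R_succ {β : Type*} [AddCommMonoid β] (n : ℕ) (g : G m → β) :
    ∑ y ∈ R m (n + 1), g y = ∑ y ∈ R m n, ∑ s : ZMod (m n), g (Function.update y n s) := by
  classical
  have : R m (n + 1) =
    (R m n ×ˢ (univ : Finset (ZMod (m n)))).image fun p => Function.update p.1 n p.2 := by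
      simp only [R]
  rw [this, sum_image, sum_product]
  rintro ⟨y, s⟩ hy ⟨z, t⟩ hz h
  simp only [coe_product, Set.mem_prod, mem_coe, coe_univ, Set.mem_univ, and_true] at hy hz
  simp only at h
  have hst : s = t := by have := congrFun h n; simpa using this
  have hyz : y = z := eq_of_mem_R hy hz fun j hj => by
    have := congrFun h j
    simpa [Function.update_of_ne hj.ne] using this
  rw [hst, hyz]

/-- Average over the cylinders of level `n`. -/
def av (m : ℕ → ℕ) [∀ n, NeZero (m n)] (n : ℕ) (g : G m → ℝ) : ℝ :=
  (∑ y ∈ R m n, g y) / MM m n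

lemma av_mono {n : ℕ} {g h : G m → ℝ} (hgh : ∀ x, g x ≤ h x) : av m n g ≤ av m n h := by
  unfold av; gcongr with y; exact hgh y

lemma av_nonneg {n : ℕ} {g : G m → ℝ} (hg : ∀ x, 0 ≤ g x) : 0 ≤ av m n g :=
  div_nonneg (sum_nonneg fun y _ => hg y) (by positivity)

lemma av_add (n : ℕ) (g h : G m → ℝ) : av m n (fun x => g x + h x) = av m n g + av m n h := by
  unfold av; rw [sum_add_distrib, add_div]

lemma av_const_mul (n : ℕ) (c : ℝ) (g : G m → ℝ) :
    av m n (fun x => c * g x) = c * av m n g := by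
  unfold av; rw [← mul_sum, mul_div_assoc]

lemma av_sum {ι : Type*} (n : ℕ) (s : Finset ι) (g : ι → G m → ℝ) :
    av m n (fun x => ∑ i ∈ s, g i x) = ∑ i ∈ s, av m n (g i) := by
  unfold av; rw [sum_comm, sum_div]

lemma av_succ_eq (n : ℕ) (g : G m → ℝ) :
    av m (n + 1) g = av m n (fun y => (∑ s : ZMod (m n), g (Function.update y n s)) / m n) := by
  unfold av
  rw [sum_R_succ, ← sum_div, div_div]
  simp only [MM]; push_cast; rfl

lemma av_succ {n : ℕ} {g : G m → ℝ} (h : Dep n g) : av m (n + 1) g = av m n g := by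
  rw [av_succ_eq]
  congr 1
  funext y
  have : ∀ s : ZMod (m n), g (Function.update y n s) = g y := fun s =>
    h _ _ fun j hj => Function.update_of_ne hj.ne _ _
  simp only [this, sum_const, card_univ, ZMod.card, nsmul_eq_mul]
  have : (m n : ℝ) ≠ 0 := by exact_mod_cast NeZero.ne (m n)
  field_simp

lemma av_eq_of_le {n k : ℕ} (hk : n ≤ k) {g : G m → ℝ} (h : Dep n g) : av m k g = av m n g := by
  induction k, hk using Nat.le_induction with
  | base => rfl
  | succ k hk ih => rw [av_succ (h.mono hk), ih]

/-! ### Integration over cylinders -/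

lemma self_mem_cyl (n : ℕ) (x : G m) : x ∈ cyl m n x := fun _ _ => rfl

lemma measurableSet_cyl (n : ℕ) (x : G m) : MeasurableSet (cyl m n x) := by
  have : cyl m n x = ⋂ j ∈ Set.Iio n, (fun y : G m => y j) ⁻¹' {x j} := by
    ext y; simp [cyl]
  rw [this]
  refine MeasurableSet.biInter (Set.to_countable _) fun j _ => ?_
  exact measurable_pi_apply j (MeasurableSet.singleton _)

lemma measurableSet_filt_cyl (n : ℕ) (x : G m) : MeasurableSet[filt m n] (cyl m n x) := by
  refine ⟨{fun i : Fin n => x i.val}, MeasurableSet.singleton _, ?_⟩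
  ext y
  simp only [Set.mem_preimage, Set.mem_singleton_iff, cyl, Set.mem_ofPred_eq, funext_iff]
  exact ⟨fun h j hj => h ⟨j, hj⟩, fun h i => h i.val i.isLt⟩

lemma iUnion_cyl (n : ℕ) : ⋃ y ∈ R m n, cyl m n y = Set.univ := by
  refine Set.eq_univ_of_forall fun x => ?_
  simp only [Set.mem_iUnion]
  exact ⟨trunc n x, trunc_mem_R n x, fun j hj => (trunc_apply x hj).symm⟩

lemma disjoint_cyl (n : ℕ) : (R m n : Set (G m)).PairwiseDisjoint (cyl m n) := by
  intro y hy z hz hyz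
  refine Set.disjoint_left.mpr fun x hx hx' => hyz ?_
  exact eq_of_mem_R hy hz fun j hj => (hx j hj).symm.trans (hx' j hj)

lemma Dep.measurable {β : Type*} [MeasurableSpace β] {n : ℕ} {g : G m → β} (h : Dep n g) :
    Measurable g := by
  classical
  intro s _
  have : g ⁻¹' s = ⋃ y ∈ (R m n).filter (fun y => g y ∈ s), cyl m n y := by
    ext x
    simp only [Set.mem_preimage, mem_filter, Set.mem_iUnion, exists_prop]
    constructor
    · intro hx
      exact ⟨trunc n x, ⟨trunc_mem_R n x, by rwa [h.on_trunc]⟩,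
        fun j hj => (trunc_apply x hj).symm⟩
    · rintro ⟨y, ⟨_, hy⟩, hx⟩
      rwa [h x y hx]
  rw [this]
  exact Finset.measurableSet_biUnion _ fun y _ => measurableSet_cyl n y

lemma Dep.integrable {n : ℕ} {g : G m → ℂ} (h : Dep n g) (μ : Measure (G m))
    [IsFiniteMeasure μ] : Integrable g μ := by
  refine Integrable.of_bound h.measurable.aestronglyMeasurable (∑ y ∈ R m n, ‖g y‖)
    (Eventually.of_forall fun x => ?_)
  rw [← h.on_trunc]
  exact single_le_sum (f := fun y => ‖g y‖) (fun y _ => norm_nonneg _) (trunc_mem_R n x)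

lemma lintegral_cyl (μ : Measure (G m)) (n : ℕ) (g : G m → ℝ≥0∞) :
    ∫⁻ x, g x ∂μ = ∑ y ∈ R m n, ∫⁻ x in cyl m n y, g x ∂μ := by
  rw [← lintegral_biUnion_finset (disjoint_cyl n) (fun y _ => measurableSet_cyl n y), iUnion_cyl,
    Measure.restrict_univ]

lemma integral_cyl {E : Type*} [NormedAddCommGroup E] [NormedSpace ℝ E]
    (μ : Measure (G m)) (n : ℕ) {g : G m → E} (hg : Integrable g μ) :
    ∫ x, g x ∂μ = ∑ y ∈ R m n, ∫ x in cyl m n y, g x ∂μ := by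
  rw [← integral_biUnion_finset (R m n) (fun y _ => measurableSet_cyl n y) (disjoint_cyl n)
    (fun y _ => hg.integrableOn), iUnion_cyl, Measure.restrict_univ]

lemma lintegral_dep {μ : Measure (G m)} (hm : ∀ n, 2 ≤ m n)
    (hμ : ∀ (n : ℕ) (x : G m), μ (cyl m n x) = ((MM m n : ℝ≥0∞))⁻¹) {n : ℕ} {g : G m → ℝ}
    (h : Dep n g) (hg : ∀ x, 0 ≤ g x) :
    ∫⁻ x, ENNReal.ofReal (g x) ∂μ = ENNReal.ofReal (av m n g) := by
  rw [lintegral_cyl μ n, av, sum_div, ENNReal.ofReal_sum_of_nonneg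
    (fun y _ => div_nonneg (hg y) (by positivity))]
  refine sum_congr rfl fun y _ => ?_
  rw [setLIntegral_congr_fun (g := fun _ => ENNReal.ofReal (g y)) (measurableSet_cyl n y)
    (fun x hx => by simp only; rw [h x y hx]), setLIntegral_const, hμ]
  have : (0 : ℝ) < MM m n := by exact_mod_cast MM_pos hm n
  rw [ENNReal.ofReal_div_of_pos this, ENNReal.ofReal_natCast, div_eq_mul_inv]

/-! ### Martingales -/

lemma IsMartingale.dep {μ : Measure (G m)} {f : ℕ → G m → ℂ} (hf : IsMartingale m μ f) (n : ℕ) :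
    Dep n (f n) := by
  intro x y hxy
  obtain ⟨s, _, hs⟩ := hf.2.1 n (MeasurableSet.singleton (f n x))
  have hx : x ∈ f n ⁻¹' {f n x} := rfl
  rw [← hs] at hx
  have hy : y ∈ f n ⁻¹' {f n x} := by
    rw [← hs]
    have : (fun i : Fin n => y i.val) = fun i : Fin n => x i.val :=
      funext fun i => (hxy i.val i.isLt).symm
    simpa [this] using hx
  exact hy.symm

lemma IsMartingale.integral_diff {μ : Measure (G m)} [IsProbabilityMeasure μ] {f : ℕ → G m → ℂ}
    (hf : IsMartingale m μ f) {n : ℕ} {g : G m → ℂ} (hg : Dep n g) :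
    ∫ x, g x * (f (n + 1) x - f n x) ∂μ = 0 := by
  have hd : Dep (n + 1) fun x => g x * (f (n + 1) x - f n x) := by
    intro x y hxy
    have := hf.dep (n + 1) x y hxy
    have h2 := (hf.dep n).mono (Nat.le_succ n) x y hxy
    have h3 := hg.mono (Nat.le_succ n) x y hxy
    simp only [this, h2, h3]
  rw [integral_cyl μ n (hd.integrable μ)]
  refine sum_eq_zero fun y _ => ?_
  rw [setIntegral_congr_fun (g := fun x => g y * (f (n + 1) x - f n x)) (measurableSet_cyl n y)
    (fun x hx => by simp only; rw [hg x y hx]), integral_const_mul,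
    integral_sub (hf.1 _).integrableOn (hf.1 _).integrableOn,
    hf.2.2 n _ (measurableSet_filt_cyl n y), sub_self, mul_zero]

end reps


/-! ### Dyadic rounding -/

/-- Rounding down to a power of two. -/
def rnd (a : ℝ) : ℝ := if a = 0 then 0 else (2 : ℝ) ^ (Int.log 2 a)

lemma rnd_nonneg (a : ℝ) : 0 ≤ rnd a := by
  unfold rnd; split_ifs <;> positivity

lemma rnd_le {a : ℝ} (ha : 0 ≤ a) : rnd a ≤ a := by
  unfold rnd; split_ifs with h
  · exact ha
  · exact_mod_cast Int.zpow_log_le_self (b := 2) (by norm_num) (lt_of_le_of_ne ha (Ne.symm h))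

lemma le_rnd (a : ℝ) : a ≤ 2 * rnd a := by
  unfold rnd; split_ifs with h
  · simp [h]
  · have := Int.lt_zpow_succ_log_self (b := 2) (by norm_num) a
    rw [zpow_add_one₀ (by norm_num)] at this
    push_cast at this
    linarith

lemma rnd_mono {a b : ℝ} (ha : 0 ≤ a) (hab : a ≤ b) : rnd a ≤ rnd b := by
  by_cases h : a = 0
  · rw [rnd, if_pos h]; exact rnd_nonneg b
  · have ha' : 0 < a := lt_of_le_of_ne ha (Ne.symm h)
    rw [rnd, if_neg h, rnd, if_neg (ha'.trans_le hab).ne']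
    exact zpow_le_zpow_right₀ (by norm_num) (Int.log_mono_right ha' hab)

lemma rnd_gap {a b : ℝ} (h : rnd a < rnd b) : 2 * rnd a ≤ rnd b := by
  by_cases ha : a = 0
  · have : rnd a = 0 := by rw [rnd, if_pos ha]
    rw [this, mul_zero]; exact rnd_nonneg b
  by_cases hb : b = 0
  · have : rnd b = 0 := by rw [rnd, if_pos hb]
    rw [this] at h; exact absurd h (not_lt.mpr (rnd_nonneg a))
  rw [rnd, if_neg ha, rnd, if_neg hb] at h ⊢
  have := (zpow_lt_zpow_iff_right₀ (by norm_num : (1 : ℝ) < 2)).mp h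
  rw [mul_comm, ← zpow_add_one₀ (by norm_num)]
  exact zpow_le_zpow_right₀ (by norm_num) (by omega)

/-! ### The predictable majorant and the decomposition -/

section decomp
set_option linter.unusedSectionVars false
variable {m : ℕ → ℕ} [∀ n, NeZero (m n)]

/-- The maximum of `|f^{(n+1)}|` over a cylinder of level `n`. -/
def hh (f : ℕ → G m → ℂ) (n : ℕ) (x : G m) : ℝ :=
  (univ : Finset (ZMod (m n))).sup' ⟨0, mem_univ _⟩ fun s => ‖f (n + 1) (Function.update x n s)‖

/-- The predictable majorant. -/
def Lam (f : ℕ → G m → ℂ) : ℕ → G m → ℝ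
  | 0, x => ‖f 0 x‖
  | n + 1, x => max (Lam f n x) (hh f n x)

/-- The running maximal function. -/
def Fs (f : ℕ → G m → ℂ) : ℕ → G m → ℝ
  | 0, x => ‖f 0 x‖
  | n + 1, x => max (Fs f n x) ‖f (n + 1) x‖

lemma le_hh (f : ℕ → G m → ℂ) (n : ℕ) (x : G m) (s : ZMod (m n)) :
    ‖f (n + 1) (Function.update x n s)‖ ≤ hh f n x :=
  le_sup' (fun s => ‖f (n + 1) (Function.update x n s)‖) (mem_univ s)

lemma norm_le_hh (f : ℕ → G m → ℂ) (n : ℕ) (x : G m) : ‖f (n + 1) x‖ ≤ hh f n x := by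
  simpa using le_hh f n x (x n)

lemma dep_hh {f : ℕ → G m → ℂ} (hf : ∀ n, Dep n (f n)) (n : ℕ) : Dep n (hh f n) := by
  intro x y hxy
  unfold hh
  congr 1
  funext s
  congr 1
  refine hf (n + 1) _ _ fun j hj => ?_
  rcases Nat.lt_succ_iff_lt_or_eq.mp hj with h | rfl
  · rw [Function.update_of_ne h.ne, Function.update_of_ne h.ne, hxy j h]
  · simp

lemma dep_Lam {f : ℕ → G m → ℂ} (hf : ∀ n, Dep n (f n)) (n : ℕ) : Dep n (Lam f n) := by
  induction n with
  | zero => intro x y hxy; simp only [Lam]; rw [hf 0 x y hxy]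
  | succ n ih =>
    intro x y hxy
    simp only [Lam]
    rw [ih.mono (Nat.le_succ n) x y hxy, (dep_hh hf n).mono (Nat.le_succ n) x y hxy]

lemma dep_Lam_succ {f : ℕ → G m → ℂ} (hf : ∀ n, Dep n (f n)) (n : ℕ) : Dep n (Lam f (n + 1)) := by
  intro x y hxy
  simp only [Lam]
  rw [dep_Lam hf n x y hxy, dep_hh hf n x y hxy]

lemma dep_Fs {f : ℕ → G m → ℂ} (hf : ∀ n, Dep n (f n)) (n : ℕ) : Dep n (Fs f n) := by
  induction n with
  | zero => intro x y hxy; simp only [Fs]; rw [hf 0 x y hxy]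
  | succ n ih =>
    intro x y hxy
    simp only [Fs]
    rw [ih.mono (Nat.le_succ n) x y hxy, hf (n + 1) x y hxy]

lemma Lam_mono (f : ℕ → G m → ℂ) (x : G m) : Monotone fun n => Lam f n x :=
  monotone_nat_of_le_succ fun _ => le_max_left _ _

lemma Fs_nonneg (f : ℕ → G m → ℂ) (n : ℕ) (x : G m) : 0 ≤ Fs f n x := by
  cases n with
  | zero => exact norm_nonneg _
  | succ n => exact le_max_of_le_right (norm_nonneg _)

lemma Fs_le_Lam (f : ℕ → G m → ℂ) (n : ℕ) (x : G m) : Fs f n x ≤ Lam f n x := by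
  induction n with
  | zero => exact le_rfl
  | succ n ih => exact max_le_max ih (norm_le_hh f n x)

lemma norm_le_Lam (f : ℕ → G m → ℂ) (n : ℕ) (x : G m) : ‖f n x‖ ≤ Lam f n x := by
  refine le_trans ?_ (Fs_le_Lam f n x)
  cases n with
  | zero => exact le_rfl
  | succ n => exact le_max_right _ _

lemma Lam_nonneg (f : ℕ → G m → ℂ) (n : ℕ) (x : G m) : 0 ≤ Lam f n x :=
  (norm_nonneg _).trans (norm_le_Lam f n x)

lemma av_Lam_le {f : ℕ → G m → ℂ} (hf : ∀ n, Dep n (f n)) {B : ℕ} (hB : ∀ n, m n ≤ B)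
    {p : ℝ} (hp : 0 < p) (n : ℕ) :
    av m n (fun x => Lam f n x ^ p) ≤ B * av m n (fun x => Fs f n x ^ p) := by
  have hB1 : (1 : ℝ) ≤ B := by
    exact_mod_cast (Nat.one_le_iff_ne_zero.mpr (NeZero.ne (m 0))).trans (hB 0)
  induction n with
  | zero =>
    have h0 : 0 ≤ av m 0 (fun x => Fs f 0 x ^ p) :=
      av_nonneg fun x => Real.rpow_nonneg (Fs_nonneg f 0 x) p
    have : (fun x => Lam f 0 x ^ p) = fun x => Fs f 0 x ^ p := rfl
    rw [this]; nlinarith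
  | succ n ih =>
    have hmpos : (0 : ℝ) < m n := by exact_mod_cast Nat.pos_of_ne_zero (NeZero.ne (m n))
    -- one step
    have hdepL : Dep n fun x => Lam f (n + 1) x ^ p := fun x y hxy => by
      simp only; rw [dep_Lam_succ hf n x y hxy]
    rw [av_succ hdepL, av_succ_eq n (fun x => Fs f (n + 1) x ^ p)]
    have hFn : ∀ x (s : ZMod (m n)), Fs f n (Function.update x n s) = Fs f n x := fun x s =>
      dep_Fs hf n _ _ fun j hj => Function.update_of_ne hj.ne _ _
    have key : ∀ x, Lam f (n + 1) x ^ p + m n * Fs f n x ^ p ≤ Lam f n x ^ p +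
        m n * ((∑ s : ZMod (m n), Fs f (n + 1) (Function.update x n s) ^ p) / m n) := by
      intro x
      rw [mul_div_cancel₀ _ hmpos.ne']
      have hge : ∀ s : ZMod (m n),
          Fs f n x ^ p ≤ Fs f (n + 1) (Function.update x n s) ^ p := fun s => by
        refine Real.rpow_le_rpow (Fs_nonneg _ _ _) ?_ hp.le
        simp only [Fs, hFn]; exact le_max_left _ _
      have hcard : (m n : ℝ) * Fs f n x ^ p = ∑ s : ZMod (m n), Fs f n x ^ p := by
        simp [ZMod.card]
      rcases le_total (hh f n x) (Lam f n x) with h | h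
      · have : Lam f (n + 1) x = Lam f n x := by simp only [Lam]; exact max_eq_left h
        rw [this, hcard]
        exact add_le_add le_rfl (sum_le_sum fun s _ => hge s)
      · have e : Lam f (n + 1) x = hh f n x := by simp only [Lam]; exact max_eq_right h
        obtain ⟨s, _, hs⟩ := exists_mem_eq_sup' (s := (univ : Finset (ZMod (m n))))
          ⟨0, mem_univ _⟩ (fun s => ‖f (n + 1) (Function.update x n s)‖)
        have hs' : hh f n x ≤ Fs f (n + 1) (Function.update x n s) := by
          unfold hh; rw [hs]; exact le_max_right _ _
        rw [e, hcard, ← add_sum_erase univ _ (mem_univ s),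
          ← add_sum_erase univ (fun s => Fs f (n + 1) (Function.update x n s) ^ p) (mem_univ s)]
        have h1 : hh f n x ^ p ≤ Fs f (n + 1) (Function.update x n s) ^ p :=
          Real.rpow_le_rpow ((Lam_nonneg f n x).trans h) hs' hp.le
        have h2 : Fs f n x ^ p ≤ Lam f n x ^ p :=
          Real.rpow_le_rpow (Fs_nonneg _ _ _) (Fs_le_Lam f n x) hp.le
        have h3 : ∑ s ∈ univ.erase s, Fs f n x ^ p ≤
            ∑ s ∈ univ.erase s, Fs f (n + 1) (Function.update x n s) ^ p :=
          sum_le_sum fun s _ => hge s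
        linarith
    have h4 := av_mono (n := n) key
    rw [av_add, av_add, av_const_mul, av_const_mul] at h4
    have h5 : av m n (fun x => Fs f n x ^ p) ≤
        av m n (fun x => (∑ s : ZMod (m n), Fs f (n + 1) (Function.update x n s) ^ p) / m n) := by
      refine av_mono fun x => ?_
      rw [le_div_iff₀ hmpos]
      have hcard : Fs f n x ^ p * m n = ∑ s : ZMod (m n), Fs f n x ^ p := by
        simp [ZMod.card, mul_comm]
      rw [hcard]
      refine sum_le_sum fun s _ => Real.rpow_le_rpow (Fs_nonneg _ _ _) ?_ hp.le
      simp only [Fs, hFn]; exact le_max_left _ _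
    have h6 : (m n : ℝ) ≤ B := by exact_mod_cast hB n
    nlinarith

/-- The dyadic size of the predictable majorant. -/
def ee (f : ℕ → G m → ℂ) (n : ℕ) (x : G m) : ℝ := rnd (Lam f (n + 1) x)

/-- The level `n` is the start of a new dyadic size. -/
def st (f : ℕ → G m → ℂ) (n : ℕ) (x : G m) : Prop := n = 0 ∨ ee f (n - 1) x ≠ ee f n x

lemma dep_ee {f : ℕ → G m → ℂ} (hf : ∀ n, Dep n (f n)) (n : ℕ) : Dep n (ee f n) := by
  intro x y hxy; unfold ee; rw [dep_Lam_succ hf n x y hxy]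

lemma dep_st {f : ℕ → G m → ℂ} (hf : ∀ n, Dep n (f n)) (n : ℕ) : Dep n (st f n) := by
  intro x y hxy; unfold st
  rw [dep_ee hf n x y hxy, (dep_ee hf (n - 1)).mono (Nat.sub_le n 1) x y hxy]

lemma ee_nonneg (f : ℕ → G m → ℂ) (n : ℕ) (x : G m) : 0 ≤ ee f n x := rnd_nonneg _

lemma ee_mono (f : ℕ → G m → ℂ) (x : G m) : Monotone fun n => ee f n x := fun _ _ h =>
  rnd_mono (Lam_nonneg _ _ _) (Lam_mono f x (Nat.succ_le_succ h))

open Classical in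
/-- The atoms of level `N`. -/
def atm (f : ℕ → G m → ℂ) (K N : ℕ) (x : G m) : ℂ :=
  (if N = 0 then f 0 x else 0) +
    ∑ n ∈ range K, if st f N x ∧ N ≤ n ∧ ee f n x = ee f N x then f (n + 1) x - f n x else 0

lemma sum_atm (f : ℕ → G m → ℂ) {K : ℕ} (hK : 1 ≤ K) (x : G m) :
    ∑ N ∈ range K, atm f K N x = f K x := by
  classical
  unfold atm
  rw [sum_add_distrib, sum_ite_eq' (range K) 0 (fun _ => f 0 x),
    if_pos (mem_range.mpr hK), sum_comm]
  have key : ∀ n, ∑ N ∈ range (n + 1),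
      (if st f N x ∧ ee f n x = ee f N x then (1 : ℂ) else 0) = 1 := by
    intro n
    induction n with
    | zero => simp [st]
    | succ n ih =>
      rw [sum_range_succ]
      by_cases h : ee f n x = ee f (n + 1) x
      · rw [← h, ih, if_neg, add_zero]
        rintro ⟨h1, _⟩
        rcases h1 with h1 | h1
        · omega
        · exact h1 h
      · rw [sum_eq_zero, zero_add, if_pos ⟨Or.inr h, rfl⟩]
        intro N hN
        rw [if_neg]
        rintro ⟨_, h2⟩
        have hN' : N ≤ n := Nat.lt_succ_iff.mp (mem_range.mp hN)
        exact h (le_antisymm (ee_mono f x (Nat.le_succ n)) (h2 ▸ ee_mono f x hN'))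
  have hsum : ∀ n ∈ range K, ∑ N ∈ range K,
      (if st f N x ∧ N ≤ n ∧ ee f n x = ee f N x then f (n + 1) x - f n x else 0)
        = f (n + 1) x - f n x := by
    intro n hn
    calc _ = ∑ N ∈ range (n + 1),
          (if st f N x ∧ N ≤ n ∧ ee f n x = ee f N x then f (n + 1) x - f n x else 0) := by
          refine (sum_subset (range_mono (Nat.succ_le_of_lt (mem_range.mp hn))) ?_).symm
          intro N _ hN
          rw [if_neg]
          rintro ⟨_, h, _⟩
          exact hN (mem_range.mpr (Nat.lt_succ_of_le h))
      _ = ∑ N ∈ range (n + 1), (if st f N x ∧ ee f n x = ee f N x then (1 : ℂ) else 0) *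
            (f (n + 1) x - f n x) := by
          refine sum_congr rfl fun N hN => ?_
          have : N ≤ n := Nat.lt_succ_iff.mp (mem_range.mp hN)
          simp only [this, true_and]
          split_ifs <;> simp
      _ = _ := by rw [← sum_mul, key n, one_mul]
  rw [sum_congr rfl hsum, sum_range_sub (fun n => f n x)]
  ring

lemma atm_of_not_st (f : ℕ → G m → ℂ) (K N : ℕ) (x : G m) (h : ¬ st f N x) :
    atm f K N x = 0 := by
  have h0 : N ≠ 0 := fun h0 => h (Or.inl h0)
  simp [atm, h, h0]

lemma norm_atm_le (f : ℕ → G m → ℂ) (K N : ℕ) (x : G m) : ‖atm f K N x‖ ≤ 4 * ee f N x := by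
  classical
  by_cases hst : st f N x
  swap
  · rw [atm_of_not_st f K N x hst, norm_zero]; linarith [ee_nonneg f N x]
  have hb : ∀ n, N ≤ n → ee f n x = ee f N x → ‖f (n + 1) x‖ ≤ 2 * ee f N x := by
    intro n _ h
    rw [← h]
    exact (norm_le_Lam f (n + 1) x).trans (le_rnd _)
  have hN : ‖f N x‖ ≤ 2 * ee f N x :=
    ((norm_le_Lam f N x).trans (Lam_mono f x (Nat.le_succ N))).trans (le_rnd _)
  rcases lt_or_ge K N with hK | hK
  · have : atm f K N x = 0 := by
      unfold atm
      rw [if_neg (by omega), zero_add]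
      refine sum_eq_zero fun n hn => if_neg ?_
      rintro ⟨_, h, _⟩
      have := mem_range.mp hn
      omega
    rw [this, norm_zero]; linarith [ee_nonneg f N x]
  · have key : ∃ τ, atm f K N x = f τ x - (if N = 0 then 0 else f N x) ∧
        ‖f τ x‖ ≤ 2 * ee f N x ∧ ((K = N ∨ ee f (K - 1) x = ee f N x) → τ = K) := by
      induction K, hK using Nat.le_induction with
      | base =>
        refine ⟨N, ?_, hN, fun _ => rfl⟩
        unfold atm
        rw [sum_eq_zero, add_zero]
        · split_ifs with h
          · rw [h, sub_zero]
          · rw [sub_self]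
        · intro n hn
          refine if_neg ?_
          rintro ⟨_, h, _⟩
          have := mem_range.mp hn
          omega
      | succ K hK ih =>
        obtain ⟨τ, h1, h2, h3⟩ := ih
        have e : atm f (K + 1) N x = atm f K N x +
            if st f N x ∧ N ≤ K ∧ ee f K x = ee f N x then f (K + 1) x - f K x else 0 := by
          unfold atm; rw [sum_range_succ, add_assoc]
        by_cases h : ee f K x = ee f N x
        · have hτ : τ = K := by
            apply h3
            rcases Nat.eq_or_lt_of_le hK with h' | h'
            · exact Or.inl h'.symm
            · right
              refine le_antisymm ?_ (ee_mono f x (by omega))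
              rw [← h]; exact ee_mono f x (Nat.sub_le K 1)
          refine ⟨K + 1, ?_, hb K hK h, fun _ => rfl⟩
          rw [e, if_pos ⟨hst, hK, h⟩, h1, hτ]; ring
        · refine ⟨τ, ?_, h2, ?_⟩
          · rw [e, if_neg (fun h' => h h'.2.2), h1, add_zero]
          · rintro (h' | h')
            · omega
            · exact absurd (by simpa using h') h
    obtain ⟨τ, h1, h2, _⟩ := key
    rw [h1]
    refine (norm_sub_le _ _).trans ?_
    have : ‖(if N = 0 then 0 else f N x)‖ ≤ 2 * ee f N x := by
      split_ifs
      · rw [norm_zero]; linarith [ee_nonneg f N x]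
      · exact hN
    linarith

lemma dep_atm {f : ℕ → G m → ℂ} (hf : ∀ n, Dep n (f n)) {K N : ℕ} (hN : N ≤ K) :
    Dep K (atm f K N) := by
  classical
  intro x y hxy
  unfold atm
  rw [(hf 0).mono (Nat.zero_le K) x y hxy]
  congr 1
  refine sum_congr rfl fun n hn => ?_
  have hn := mem_range.mp hn
  rw [(dep_st hf N).mono hN x y hxy, (dep_ee hf N).mono hN x y hxy,
    (dep_ee hf n).mono hn.le x y hxy, (hf n).mono hn.le x y hxy, (hf (n + 1)).mono hn x y hxy]

lemma integral_atm {μ : Measure (G m)} [IsProbabilityMeasure μ] {f : ℕ → G m → ℂ}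
    (hf : IsMartingale m μ f) (K : ℕ) {N : ℕ} (hN : 1 ≤ N) {g : G m → ℂ} (hg : Dep N g) :
    ∫ x, g x * atm f K N x ∂μ = 0 := by
  classical
  have hd := fun n => hf.dep n
  have e : ∀ x, g x * atm f K N x = ∑ n ∈ range K,
      (g x * if st f N x ∧ N ≤ n ∧ ee f n x = ee f N x then 1 else 0) *
        (f (n + 1) x - f n x) := by
    intro x
    unfold atm
    rw [if_neg (by omega), zero_add, mul_sum]
    refine sum_congr rfl fun n _ => ?_
    split_ifs <;> simp
  have hdep : ∀ n, Dep n fun x =>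
      (g x * if st f N x ∧ N ≤ n ∧ ee f n x = ee f N x then (1 : ℂ) else 0) := by
    intro n x y hxy
    simp only
    by_cases hn : N ≤ n
    · rw [hg.mono hn x y hxy, (dep_st hd N).mono hn x y hxy, (dep_ee hd N).mono hn x y hxy,
        dep_ee hd n x y hxy]
    · simp [hn]
  simp only [e]
  rw [integral_finsetSum]
  · exact sum_eq_zero fun n _ => hf.integral_diff (hdep n)
  · intro n _
    refine Dep.integrable (n := n + 1) ?_ μ
    intro x y hxy
    have h1 := (hdep n).mono (Nat.le_succ n) x y hxy
    simp only at h1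
    simp only
    rw [h1, hd (n + 1) x y hxy, (hd n).mono (Nat.le_succ n) x y hxy]

open Classical in
/-- The size of the atom of level `N`. -/
def es (f : ℕ → G m → ℂ) (N : ℕ) (x : G m) : ℝ := if st f N x then ee f N x else 0

lemma es_nonneg (f : ℕ → G m → ℂ) (N : ℕ) (x : G m) : 0 ≤ es f N x := by
  unfold es; split_ifs
  · exact ee_nonneg f N x
  · exact le_rfl

lemma norm_atm_le_es (f : ℕ → G m → ℂ) (K N : ℕ) (x : G m) : ‖atm f K N x‖ ≤ 4 * es f N x := by
  unfold es; split_ifs with h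
  · exact norm_atm_le f K N x
  · rw [atm_of_not_st f K N x h]; simp

lemma dep_es {f : ℕ → G m → ℂ} (hf : ∀ n, Dep n (f n)) (N : ℕ) : Dep N (es f N) := by
  intro x y hxy
  unfold es
  rw [dep_st hf N x y hxy, dep_ee hf N x y hxy]

lemma sum_es_le (f : ℕ → G m → ℂ) {p : ℝ} (hp : 0 < p) (K : ℕ) (x : G m) :
    ∑ N ∈ range K, es f N x ^ p ≤ (1 - 2 ^ (-p))⁻¹ * Lam f K x ^ p := by
  have h2 : (2 : ℝ) ^ (-p) < 1 := Real.rpow_lt_one_of_one_lt_of_neg (by norm_num) (by linarith)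
  have h2' : (0 : ℝ) < 2 ^ (-p) := by positivity
  have hC : (0 : ℝ) < (1 - 2 ^ (-p))⁻¹ := inv_pos.mpr (by linarith)
  have hC1 : (1 - 2 ^ (-p) : ℝ)⁻¹ = (1 - 2 ^ (-p))⁻¹ * 2 ^ (-p) + 1 := by
    have : (1 - 2 ^ (-p) : ℝ) ≠ 0 := by linarith
    field_simp; ring
  set C : ℝ := (1 - 2 ^ (-p))⁻¹ with hCdef
  have hnn : ∀ n, 0 ≤ ee f n x ^ p := fun n => Real.rpow_nonneg (ee_nonneg f n x) p
  have key : ∀ n, ∑ N ∈ range (n + 1), es f N x ^ p ≤ C * ee f n x ^ p := by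
    intro n
    induction n with
    | zero =>
      have : es f 0 x = ee f 0 x := by unfold es; exact if_pos (Or.inl rfl)
      simp only [zero_add, range_one, sum_singleton]
      rw [this]
      nlinarith [hnn 0]
    | succ n ih =>
      rw [sum_range_succ]
      by_cases h : ee f n x = ee f (n + 1) x
      · have : es f (n + 1) x = 0 := by
          unfold es
          refine if_neg ?_
          rintro (h' | h')
          · omega
          · exact h' h
        rw [this, Real.zero_rpow hp.ne', add_zero, ← h]; exact ih
      · have e : es f (n + 1) x = ee f (n + 1) x := by
          unfold es; exact if_pos (Or.inr h)
        have hlt : ee f n x < ee f (n + 1) x := lt_of_le_of_ne (ee_mono f x (Nat.le_succ n)) h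
        have hgap : 2 * ee f n x ≤ ee f (n + 1) x := rnd_gap hlt
        have h3 : ee f n x ^ p ≤ 2 ^ (-p) * ee f (n + 1) x ^ p := by
          have := Real.rpow_le_rpow (by linarith [ee_nonneg f n x]) hgap hp.le
          rw [Real.mul_rpow (by norm_num) (ee_nonneg f n x)] at this
          rw [Real.rpow_neg (by norm_num), inv_mul_eq_div, le_div_iff₀ (by positivity)]
          linarith
        rw [e]
        nlinarith [hnn (n + 1), mul_le_mul_of_nonneg_left h3 hC.le]
  cases K with
  | zero =>
    simp only [range_zero, sum_empty]
    exact mul_nonneg hC.le (Real.rpow_nonneg (Lam_nonneg _ _ _) _)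
  | succ n =>
    refine (key n).trans (mul_le_mul_of_nonneg_left ?_ hC.le)
    exact Real.rpow_le_rpow (ee_nonneg f n x) (rnd_le (Lam_nonneg _ _ _)) hp.le

/-- The total size of the atoms is controlled by the maximal function. -/
lemma sum_av_es_le {f : ℕ → G m → ℂ} (hf : ∀ n, Dep n (f n)) {B : ℕ} (hB : ∀ n, m n ≤ B)
    {p : ℝ} (hp : 0 < p) (K : ℕ) :
    ∑ N ∈ range K, av m N (fun x => es f N x ^ p) ≤
      (1 - 2 ^ (-p))⁻¹ * (B * av m K (fun x => Fs f K x ^ p)) := by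
  have h2 : (2 : ℝ) ^ (-p) < 1 := Real.rpow_lt_one_of_one_lt_of_neg (by norm_num) (by linarith)
  have hC : (0 : ℝ) < (1 - 2 ^ (-p))⁻¹ := inv_pos.mpr (by linarith)
  calc ∑ N ∈ range K, av m N (fun x => es f N x ^ p)
      = ∑ N ∈ range K, av m K (fun x => es f N x ^ p) := by
        refine sum_congr rfl fun N hN => (av_eq_of_le (mem_range.mp hN).le ?_).symm
        intro x y hxy
        simp only; rw [dep_es hf N x y hxy]
    _ = av m K (fun x => ∑ N ∈ range K, es f N x ^ p) := (av_sum _ _ _).symm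
    _ ≤ av m K (fun x => (1 - 2 ^ (-p))⁻¹ * Lam f K x ^ p) := av_mono fun x => sum_es_le f hp K x
    _ = (1 - 2 ^ (-p))⁻¹ * av m K (fun x => Lam f K x ^ p) := av_const_mul _ _ _
    _ ≤ _ := mul_le_mul_of_nonneg_left (av_Lam_le hf hB hp K) hC.le

end decomp

/-! ### Part 5: kernel integrals -/

section kernel
set_option linter.unusedSectionVars false
variable {m : ℕ → ℕ} [∀ n, NeZero (m n)]

lemma dep_psi (hm : ∀ n, 2 ≤ m n) {n J : ℕ} (h : n < MM m J) : Dep J (psi m n) := by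
  intro x y hxy
  rw [psi_eq hm h, psi_eq hm h]
  refine prod_congr rfl fun k hk => ?_
  simp only [rade, hxy k (mem_range.mp hk)]

lemma dep_D (hm : ∀ n, 2 ≤ m n) {n J : ℕ} (h : n ≤ MM m J) : Dep J (D m n) := by
  intro x y hxy
  unfold D
  exact sum_congr rfl fun k hk => dep_psi hm ((mem_range.mp hk).trans_le h) x y hxy

lemma dep_Phi (hm : ∀ n, 2 ≤ m n) (α : ℝ) {n J : ℕ} (h : n ≤ MM m J) : Dep J (Phi m α n) := by
  intro x y hxy
  unfold Phi
  exact sum_congr rfl fun k hk => by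
    rw [dep_D hm ((mem_Icc.mp hk).2.trans h) x y hxy]

lemma Dep.shift {β : Type*} {J : ℕ} {g : G m → β} (h : Dep J g) (x : G m) :
    Dep J fun t => g (x - t) := by
  intro s t hst
  refine h _ _ fun j hj => ?_
  simp [hst j hj]

lemma Dep.norm {J : ℕ} {g : G m → ℂ} (h : Dep J g) : Dep J fun t => ‖g t‖ := by
  intro s t hst
  simp only [h s t hst]

lemma integrable_kernel (hm : ∀ n, 2 ≤ m n) (μ : Measure (G m)) [IsProbabilityMeasure μ]
    (α : ℝ) (n : ℕ) (x : G m) : Integrable (fun t => ‖Phi m α n (x - t)‖) μ :=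
  (((dep_Phi hm α (lt_MM hm n).le).shift x).integrable μ).norm

lemma measureReal_cyl {μ : Measure (G m)}
    (hμ : ∀ (n : ℕ) (x : G m), μ (cyl m n x) = ((MM m n : ℝ≥0∞))⁻¹) (n : ℕ) (x : G m) :
    μ.real (cyl m n x) = (MM m n : ℝ)⁻¹ := by
  simp [Measure.real, hμ]

lemma setIntegral_le_aux {μ : Measure (G m)} [IsProbabilityMeasure μ]
    (hμ : ∀ (n : ℕ) (x : G m), μ (cyl m n x) = ((MM m n : ℝ≥0∞))⁻¹) (N : ℕ) (y : G m)
    {s : Set (G m)} (hs : s ⊆ cyl m N y) {g : G m → ℂ} {C : ℝ} (hC0 : 0 ≤ C)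
    (hC : ∀ t ∈ s, ‖g t‖ ≤ C) :
    ∫ t in s, ‖g t‖ ∂μ ≤ C * (MM m N : ℝ)⁻¹ := by
  have h1 := norm_setIntegral_le_of_norm_le_const (μ := μ) (s := s) (f := fun t => ‖g t‖) (C := C)
    (measure_lt_top _ _) (fun t ht => by simpa using hC t ht)
  rw [Real.norm_eq_abs] at h1
  refine (le_abs_self _).trans (h1.trans ?_)
  rw [← measureReal_cyl hμ N y]
  exact mul_le_mul_of_nonneg_left (measureReal_mono hs) hC0

lemma kernel_step (hm : ∀ n, 2 ≤ m n) {B : ℕ} (hB : ∀ n, m n ≤ B) {μ : Measure (G m)}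
    [IsProbabilityMeasure μ]
    (hμ : ∀ (n : ℕ) (x : G m), μ (cyl m n x) = ((MM m n : ℝ≥0∞))⁻¹)
    {α : ℝ} (h0 : 0 < α) (h1 : α < 1) (n : ℕ) (x : G m) (l : ℕ) :
    ∫ t in cyl m l x, ‖Phi m α n (x - t)‖ ∂μ ≤
      B * AC α n + ∫ t in cyl m (l + 1) x, ‖Phi m α n (x - t)‖ ∂μ := by
  have hsub : cyl m (l + 1) x ⊆ cyl m l x := fun t ht j hj => ht j (hj.trans (Nat.lt_succ_self l))
  have hItg := integrable_kernel hm μ α n x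
  rw [← integral_inter_add_sdiff (measurableSet_cyl (l + 1) x) hItg.integrableOn,
    Set.inter_eq_self_of_subset_right hsub, add_comm]
  gcongr
  have hA := AC_nonneg h0 h1 n
  refine (setIntegral_le_aux hμ l x Set.sdiff_subset (C := MM m (l + 1) * AC α n)
    (by positivity) ?_).trans ?_
  · rintro t ⟨ht, ht'⟩
    refine Phi_le_b hm h0 h1 n (l := l) ?_
    intro h
    apply ht'
    intro j hj
    rcases Nat.lt_succ_iff_lt_or_eq.mp hj with hj | rfl
    · exact ht j hj
    · simp only [Pi.sub_apply] at h
      exact (sub_eq_zero.mp h).symm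
  · have hM : (0 : ℝ) < MM m l := by exact_mod_cast MM_pos hm l
    have : (MM m (l + 1) : ℝ) = m l * MM m l := by simp [MM]
    rw [this]
    have hb : (m l : ℝ) ≤ B := by exact_mod_cast hB l
    calc (m l * MM m l * AC α n) * (MM m l : ℝ)⁻¹ = m l * AC α n := by field_simp
      _ ≤ B * AC α n := by gcongr

lemma kernel_full (hm : ∀ n, 2 ≤ m n) {B : ℕ} (hB : ∀ n, m n ≤ B) {μ : Measure (G m)}
    [IsProbabilityMeasure μ]
    (hμ : ∀ (n : ℕ) (x : G m), μ (cyl m n x) = ((MM m n : ℝ≥0∞))⁻¹)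
    {α : ℝ} (h0 : 0 < α) (h1 : α < 1) (n : ℕ) (x : G m) (s : ℕ) :
    ∫ t, ‖Phi m α n (x - t)‖ ∂μ ≤ AC α n * (B * s + n / MM m s) := by
  have key : ∫ t, ‖Phi m α n (x - t)‖ ∂μ ≤ s * (B * AC α n) +
      ∫ t in cyl m s x, ‖Phi m α n (x - t)‖ ∂μ := by
    induction s with
    | zero =>
      have : cyl m 0 x = Set.univ := by ext; simp [cyl]
      rw [this]; simp
    | succ s ih =>
      have := kernel_step hm hB hμ h0 h1 n x s
      push_cast
      linarith
  have hA := AC_nonneg h0 h1 n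
  have h2 := setIntegral_le_aux hμ s x (subset_refl _) (g := fun t => Phi m α n (x - t))
    (C := n * AC α n) (by positivity) (fun t _ => Phi_le_a h0 h1 n _)
  calc _ ≤ _ := key
    _ ≤ s * (B * AC α n) + n * AC α n * (MM m s : ℝ)⁻¹ := by gcongr
    _ = _ := by rw [div_eq_mul_inv]; ring

lemma kernel_log (hm : ∀ n, 2 ≤ m n) {B : ℕ} (hB : ∀ n, m n ≤ B) {μ : Measure (G m)}
    [IsProbabilityMeasure μ]
    (hμ : ∀ (n : ℕ) (x : G m), μ (cyl m n x) = ((MM m n : ℝ≥0∞))⁻¹)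
    {α : ℝ} (h0 : 0 < α) (h1 : α < 1) {n : ℕ} (hn : 1 ≤ n) (x : G m) :
    ∫ t, ‖Phi m α n (x - t)‖ ∂μ ≤
      AC α n * ((2 * B + 1) / Real.log 2 * Real.log (n + 1)) := by
  refine (kernel_full hm hB hμ h0 h1 n x (Nat.log 2 n + 1)).trans ?_
  have hA := AC_nonneg h0 h1 n
  refine mul_le_mul_of_nonneg_left ?_ hA
  have hl2 : 0 < Real.log 2 := Real.log_pos (by norm_num)
  have hlog2 : Real.log 2 ≤ Real.log (n + 1) := by
    apply Real.log_le_log (by norm_num)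
    have : (1 : ℝ) ≤ n := by exact_mod_cast hn
    linarith
  have hq : 1 ≤ Real.log (n + 1) / Real.log 2 := by rwa [le_div_iff₀ hl2, one_mul]
  have hk : (Nat.log 2 n : ℝ) ≤ Real.log (n + 1) / Real.log 2 := by
    rw [le_div_iff₀ hl2, ← Real.log_pow]
    apply Real.log_le_log (by positivity)
    have : 2 ^ Nat.log 2 n ≤ n := Nat.pow_log_le_self 2 (by omega)
    have : (2 : ℝ) ^ Nat.log 2 n ≤ n := by exact_mod_cast this
    linarith
  have hM : (n : ℝ) / MM m (Nat.log 2 n + 1) ≤ 1 := by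
    rw [div_le_one (by exact_mod_cast MM_pos hm _)]
    have h3 := Nat.lt_pow_succ_log_self (b := 2) (by norm_num) n
    have h4 := two_pow_le_MM hm (Nat.log 2 n + 1)
    exact_mod_cast (h3.le.trans h4)
  have hB0 : (0 : ℝ) ≤ B := by positivity
  push_cast
  have : (2 * (B : ℝ) + 1) / Real.log 2 * Real.log (n + 1) =
      (2 * B + 1) * (Real.log (n + 1) / Real.log 2) := by ring
  rw [this]
  nlinarith

/-- Points agreeing with `y` in the first `k` coordinates, except possibly the `l`-th one. -/
def EE (m : ℕ → ℕ) (l k : ℕ) (y : G m) : Set (G m) := {x | ∀ j < k, j ≠ l → x j = y j}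

/-- The majorant of the kernel integrals. -/
def WW (m : ℕ → ℕ) (p : ℝ) (N : ℕ) (y x : G m) : ℝ :=
  (cyl m N y).indicator (fun _ => 1) x + (N * MM m N : ℝ)⁻¹ *
    ∑ k ∈ range (N + 1), ∑ l ∈ range k,
      (MM m l : ℝ) ^ p * (MM m k : ℝ) ^ (1 - p) * (EE m l k y).indicator (fun _ => 1) x

lemma dep_ind_cyl (N : ℕ) (y : G m) : Dep N ((cyl m N y).indicator (fun _ => (1 : ℝ))) := by
  classical
  intro x z hxz
  have : x ∈ cyl m N y ↔ z ∈ cyl m N y :=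
    forall₂_congr fun j hj => by rw [hxz j hj]
  simp only [Set.indicator_apply, this]

lemma dep_ind_EE (l k : ℕ) (y : G m) : Dep k ((EE m l k y).indicator (fun _ => (1 : ℝ))) := by
  classical
  intro x z hxz
  have : x ∈ EE m l k y ↔ z ∈ EE m l k y :=
    forall₂_congr fun j hj => by rw [hxz j hj]
  simp only [Set.indicator_apply, this]

lemma dep_WW (p : ℝ) (N : ℕ) (y : G m) : Dep N (WW m p N y) := by
  intro x z hxz
  unfold WW
  rw [dep_ind_cyl N y x z hxz]
  congr 2
  refine sum_congr rfl fun k hk => sum_congr rfl fun l _ => ?_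
  rw [(dep_ind_EE l k y).mono (Nat.lt_succ_iff.mp (mem_range.mp hk)) x z hxz]

lemma ind_nonneg (s : Set (G m)) (x : G m) : 0 ≤ s.indicator (fun _ => (1 : ℝ)) x :=
  Set.indicator_nonneg (fun _ _ => zero_le_one) x

lemma WW_nonneg (p : ℝ) (N : ℕ) (y x : G m) : 0 ≤ WW m p N y x := by
  unfold WW
  refine add_nonneg (ind_nonneg _ _) (mul_nonneg (by positivity) ?_)
  refine sum_nonneg fun k _ => sum_nonneg fun l _ => mul_nonneg (by positivity) (ind_nonneg _ _)

lemma av_ind_cyl (N : ℕ) (y : G m) :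
    av m N ((cyl m N y).indicator (fun _ => (1 : ℝ))) ≤ 1 / MM m N := by
  classical
  unfold av
  gcongr
  simp only [Set.indicator_apply]
  rw [← sum_filter, sum_const, nsmul_eq_mul, mul_one]
  have : ((R m N).filter (fun z => z ∈ cyl m N y)).card ≤ 1 := by
    rw [card_le_one]
    intro a ha b hb
    rw [mem_filter] at ha hb
    exact eq_of_mem_R ha.1 hb.1 fun j hj => (ha.2 j hj).trans (hb.2 j hj).symm
  exact_mod_cast this

lemma av_ind_EE {B : ℕ} (hB : ∀ n, m n ≤ B) (l k : ℕ) (y : G m) :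
    av m k ((EE m l k y).indicator (fun _ => (1 : ℝ))) ≤ B / MM m k := by
  classical
  unfold av
  gcongr
  simp only [Set.indicator_apply]
  rw [← sum_filter, sum_const, nsmul_eq_mul, mul_one]
  have : ((R m k).filter (fun z => z ∈ EE m l k y)).card ≤
      (univ : Finset (ZMod (m l))).card := by
    refine card_le_card_of_injOn (fun z => z l) (fun _ _ => mem_coe.mpr (mem_univ _)) ?_
    intro a ha b hb hab
    rw [mem_coe, mem_filter] at ha hb
    refine eq_of_mem_R ha.1 hb.1 fun j hj => ?_
    by_cases h : j = l
    · subst h; exact hab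
    · exact (ha.2 j hj h).trans (hb.2 j hj h).symm
  rw [card_univ, ZMod.card] at this
  exact_mod_cast this.trans (hB l)

lemma av_WW_le (hm : ∀ n, 2 ≤ m n) {B : ℕ} (hB : ∀ n, m n ≤ B) {p : ℝ} (hp : 0 < p)
    (N : ℕ) (y : G m) :
    av m N (WW m p N y) ≤ (1 + 2 * (B * (1 - 2 ^ (-p))⁻¹)) / MM m N := by
  have hq1 : (2 : ℝ) ^ (-p) < 1 := by
    apply Real.rpow_lt_one_of_one_lt_of_neg <;> linarith
  have hq0 : (0 : ℝ) < 2 ^ (-p) := by positivity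
  set q : ℝ := 2 ^ (-p) with hq
  have hMp : ∀ n, (0 : ℝ) < MM m n := fun n => by exact_mod_cast MM_pos hm n
  have hinv : 0 < (1 - q)⁻¹ := inv_pos.mpr (by linarith)
  have e : av m N (WW m p N y) = av m N ((cyl m N y).indicator (fun _ => (1 : ℝ))) +
      (N * MM m N : ℝ)⁻¹ * ∑ k ∈ range (N + 1), ∑ l ∈ range k,
        (MM m l : ℝ) ^ p * (MM m k : ℝ) ^ (1 - p) *
          av m N ((EE m l k y).indicator (fun _ => (1 : ℝ))) := by
    unfold WW
    rw [av_add, av_const_mul, av_sum]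
    simp only [av_sum, av_const_mul]
  rw [e]
  have hk : ∀ k ∈ range (N + 1), ∑ l ∈ range k, (MM m l : ℝ) ^ p * (MM m k : ℝ) ^ (1 - p) *
      av m N ((EE m l k y).indicator (fun _ => (1 : ℝ))) ≤ B * (1 - q)⁻¹ := by
    intro k hk
    have hkN : k ≤ N := Nat.lt_succ_iff.mp (mem_range.mp hk)
    have hl : ∀ l ∈ range k, (MM m l : ℝ) ^ p * (MM m k : ℝ) ^ (1 - p) *
      av m N ((EE m l k y).indicator (fun _ => (1 : ℝ))) ≤ B * q ^ (k - l) := by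
      intro l hl
      have hlk : l < k := mem_range.mp hl
      rw [av_eq_of_le hkN (dep_ind_EE l k y)]
      calc _ ≤ (MM m l : ℝ) ^ p * (MM m k : ℝ) ^ (1 - p) * (B / MM m k) := by
            gcongr; exact av_ind_EE hB l k y
        _ = B * ((MM m l : ℝ) / MM m k) ^ p := by
            rw [Real.div_rpow (hMp l).le (hMp k).le, Real.rpow_sub (hMp k), Real.rpow_one]
            have := (hMp k).ne'
            field_simp
        _ ≤ B * q ^ (k - l) := by
            gcongr
            have h2 : (MM m l : ℝ) / MM m k ≤ ((2 : ℝ) ^ (k - l))⁻¹ := by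
              rw [div_le_iff₀ (hMp k), inv_mul_eq_div, le_div_iff₀ (by positivity), mul_comm]
              exact_mod_cast two_pow_mul_MM_le hm hlk.le
            refine (Real.rpow_le_rpow (by positivity) h2 hp.le).trans (le_of_eq ?_)
            rw [hq, ← Real.rpow_natCast, ← Real.rpow_natCast, ← Real.rpow_neg (by norm_num),
              ← Real.rpow_mul (by norm_num), ← Real.rpow_mul (by norm_num)]
            congr 1; ring
    refine (sum_le_sum hl).trans ?_
    rw [← mul_sum]
    gcongr
    rw [← tsum_geometric_of_lt_one hq0.le hq1]
    calc ∑ l ∈ range k, q ^ (k - l) ≤ ∑ j ∈ range (k + 1), q ^ j := by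
          rw [← sum_range_reflect (fun j => q ^ j) (k + 1), sum_range_succ]
          simp only [Nat.add_sub_cancel]
          have : 0 ≤ q ^ (k - k) := by positivity
          linarith
      _ ≤ _ := (summable_geometric_of_lt_one hq0.le hq1).sum_le_tsum _ (fun _ _ => by positivity)
  have hs := sum_le_sum hk
  rw [sum_const, card_range, nsmul_eq_mul] at hs
  have h1 := av_ind_cyl N y
  rw [add_div]
  refine add_le_add h1 ?_
  refine (mul_le_mul_of_nonneg_left hs (by positivity)).trans ?_
  rcases Nat.eq_zero_or_pos N with h | h
  · subst h
    simp only [CharP.cast_eq_zero, zero_mul, inv_zero]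
    positivity
  · have hN : (1 : ℝ) ≤ N := by exact_mod_cast h
    have hN0 : (0 : ℝ) < N := by linarith
    have hc : 0 ≤ (B : ℝ) * (1 - q)⁻¹ := by positivity
    set c := (B : ℝ) * (1 - q)⁻¹
    have := hMp N
    rw [inv_mul_eq_div, div_le_div_iff₀ (by positivity) (by positivity)]
    push_cast
    have : ((N : ℝ) + 1) * c ≤ 2 * c * N := by nlinarith
    nlinarith

end kernel

/-! ### Part 6: pointwise bound of the kernel integrals by the majorant -/

section kernel2
set_option linter.unusedSectionVars false
variable {m : ℕ → ℕ} [∀ n, NeZero (m n)]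

lemma WW_ge_cyl (p : ℝ) {N : ℕ} {y x : G m} (h : x ∈ cyl m N y) : 1 ≤ WW m p N y x := by
  unfold WW
  rw [Set.indicator_of_mem h]
  refine le_add_of_nonneg_right (mul_nonneg (by positivity) ?_)
  exact sum_nonneg fun k _ => sum_nonneg fun l _ => mul_nonneg (by positivity) (ind_nonneg _ _)

lemma WW_ge_EE (p : ℝ) {N k l : ℕ} (hk : k ≤ N) (hl : l < k) {y x : G m} (h : x ∈ EE m l k y) :
    (N * MM m N : ℝ)⁻¹ * ((MM m l : ℝ) ^ p * (MM m k : ℝ) ^ (1 - p)) ≤ WW m p N y x := by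
  unfold WW
  refine le_add_of_nonneg_of_le (ind_nonneg _ _) ?_
  refine mul_le_mul_of_nonneg_left ?_ (by positivity)
  have h1 : ∀ k, ∀ l, 0 ≤ (MM m l : ℝ) ^ p * (MM m k : ℝ) ^ (1 - p) *
    (EE m l k y).indicator (fun _ => (1 : ℝ)) x :=
    fun k l => mul_nonneg (by positivity) (ind_nonneg _ _)
  calc (MM m l : ℝ) ^ p * (MM m k : ℝ) ^ (1 - p)
      = (MM m l : ℝ) ^ p * (MM m k : ℝ) ^ (1 - p) *
        (EE m l k y).indicator (fun _ => (1 : ℝ)) x := by rw [Set.indicator_of_mem h, mul_one]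
    _ ≤ ∑ l ∈ range k, (MM m l : ℝ) ^ p * (MM m k : ℝ) ^ (1 - p) *
        (EE m l k y).indicator (fun _ => (1 : ℝ)) x :=
        single_le_sum (f := fun l => (MM m l : ℝ) ^ p * (MM m k : ℝ) ^ (1 - p) *
        (EE m l k y).indicator (fun _ => (1 : ℝ)) x) (fun l _ => h1 k l) (mem_range.mpr hl)
    _ ≤ _ := single_le_sum (f := fun k => ∑ l ∈ range k,
        (MM m l : ℝ) ^ p * (MM m k : ℝ) ^ (1 - p) *
        (EE m l k y).indicator (fun _ => (1 : ℝ)) x) (fun k _ => sum_nonneg fun l _ => h1 k l)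
        (mem_range.mpr (Nat.lt_succ_of_le hk))

/-- off-diagonal bound of the kernel integral -/
lemma kernel_off (hm : ∀ n, 2 ≤ m n) {B : ℕ} (hB : ∀ n, m n ≤ B) {μ : Measure (G m)}
    [IsProbabilityMeasure μ]
    (hμ : ∀ (n : ℕ) (x : G m), μ (cyl m n x) = ((MM m n : ℝ≥0∞))⁻¹)
    {α : ℝ} (h0 : 0 < α) (h1 : α < 1) {n N : ℕ} (hn : MM m N < n) {x y : G m}
    (hx : x ∉ cyl m N y) :
    ∃ l k, l < k ∧ k ≤ N ∧ x ∈ EE m l k y ∧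
      ∫ t in cyl m N y, ‖Phi m α n (x - t)‖ ∂μ ≤
        2 * (1 + 2 * B) * B * (MM m l * (MM m k : ℝ) ^ α) * AC α n *
          ((MM m N : ℝ) * (MM m N : ℝ) ^ α)⁻¹ := by
  classical
  have hMp : ∀ n, (0 : ℝ) < MM m n := fun n => by exact_mod_cast MM_pos hm n
  have hA := AC_nonneg h0 h1 n
  have hn1 : 1 ≤ n := by have := MM_pos hm N; omega
  have hAn : (MM m N : ℝ) ^ α ≤ AC α n := by
    refine le_trans ?_ (AC_lower h0 h1 hn1)
    refine Real.rpow_le_rpow (hMp N).le ?_ h0.le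
    have : (MM m N : ℝ) < n := by exact_mod_cast hn
    linarith
  have hB0 : (0 : ℝ) ≤ B := by positivity
  have hMl : ∀ l, (MM m (l + 1) : ℝ) ≤ B * MM m l := by
    intro l
    have : MM m (l + 1) ≤ B * MM m l := by
      simp only [MM]; exact Nat.mul_le_mul_right _ (hB l)
    exact_mod_cast this
  have hex : ∃ l, l < N ∧ x l ≠ y l := by
    by_contra h
    push Not at h
    exact hx fun j hj => h j hj
  obtain ⟨hlN, hl⟩ := Nat.find_spec hex
  have hlmin : ∀ j < Nat.find hex, x j = y j := by
    intro j hj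
    by_contra h
    exact Nat.find_min hex hj ⟨hj.trans hlN, h⟩
  set l := Nat.find hex
  have hdiff : ∀ j < N, x j ≠ y j → ∀ t ∈ cyl m N y, (x - t) j ≠ 0 := by
    intro j hj hne t ht h0
    apply hne
    rw [← ht j hj]
    exact sub_eq_zero.mp h0
  by_cases hex2 : ∃ k, l < k ∧ k < N ∧ x k ≠ y k
  · obtain ⟨hlk, hkN, hk⟩ := Nat.find_spec hex2
    have hkmin : ∀ j < Nat.find hex2, l < j → x j = y j := by
      intro j hj hlj
      by_contra h
      exact Nat.find_min hex2 hj ⟨hlj, hj.trans hkN, h⟩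
    set k := Nat.find hex2
    refine ⟨l, k, hlk, hkN.le, ?_, ?_⟩
    · intro j hj hjl
      rcases lt_or_gt_of_ne hjl with h | h
      · exact hlmin j h
      · exact hkmin j hj h
    have hAk := AC_nonneg h0 h1 (MM m k)
    refine (setIntegral_le_aux hμ N y (subset_refl _) (g := fun t => Phi m α n (x - t))
      (C := (1 + 2 * B) * (MM m (l + 1) * AC α (MM m k))) (by positivity) (fun t ht =>
        Phi_le_c hm hB h0 h1 n hlk (hdiff l hlN hl t ht) (hdiff k hkN hk t ht))).trans ?_
    have hM := hMp N
    have hMa : 0 < (MM m N : ℝ) ^ α := by positivity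
    have hub := AC_upper h0 h1 (MM_pos hm k)
    calc (1 + 2 * B) * (MM m (l + 1) * AC α (MM m k)) * (MM m N : ℝ)⁻¹
        ≤ (1 + 2 * B) * ((B * MM m l) * (2 * (MM m k : ℝ) ^ α)) * (MM m N : ℝ)⁻¹ := by
          gcongr
          exact hMl l
      _ = 2 * (1 + 2 * B) * B * (MM m l * (MM m k : ℝ) ^ α) * (MM m N : ℝ) ^ α *
          ((MM m N : ℝ) * (MM m N : ℝ) ^ α)⁻¹ := by field_simp
      _ ≤ _ := by gcongr
  · push Not at hex2
    refine ⟨l, N, hlN, le_rfl, ?_, ?_⟩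
    · intro j hj hjl
      rcases lt_or_gt_of_ne hjl with h | h
      · exact hlmin j h
      · exact hex2 j h hj
    refine (setIntegral_le_aux hμ N y (subset_refl _) (g := fun t => Phi m α n (x - t))
      (C := MM m (l + 1) * AC α n) (by positivity) (fun t ht =>
        Phi_le_b hm h0 h1 n (hdiff l hlN hl t ht))).trans ?_
    have hM := hMp N
    have hMa : 0 < (MM m N : ℝ) ^ α := by positivity
    calc MM m (l + 1) * AC α n * (MM m N : ℝ)⁻¹
        ≤ (B * MM m l) * AC α n * (MM m N : ℝ)⁻¹ := by
          gcongr
          exact hMl l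
      _ = 1 * B * (MM m l * (MM m N : ℝ) ^ α) * AC α n *
          ((MM m N : ℝ) * (MM m N : ℝ) ^ α)⁻¹ := by field_simp
      _ ≤ _ := by
          gcongr
          nlinarith

/-- the constant in `kernel_bound` -/
def CK (B : ℕ) (α : ℝ) : ℝ :=
  ((2 * B + 1) / Real.log 2 / Real.log 2 ^ α) ^ (1 / (1 + α)) +
    (2 * (1 + 2 * B) * B / Real.log 2 ^ (1 + α)) ^ (1 / (1 + α))

lemma CK_nonneg (B : ℕ) (α : ℝ) : 0 ≤ CK B α := by
  have hl2 : 0 < Real.log 2 := Real.log_pos (by norm_num)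
  unfold CK
  positivity

lemma kernel_bound (hm : ∀ n, 2 ≤ m n) {B : ℕ} (hB : ∀ n, m n ≤ B) {μ : Measure (G m)}
    [IsProbabilityMeasure μ]
    (hμ : ∀ (n : ℕ) (x : G m), μ (cyl m n x) = ((MM m n : ℝ≥0∞))⁻¹)
    {α : ℝ} (h0 : 0 < α) (h1 : α < 1) {n N : ℕ} (hn1 : 1 ≤ n) (hn : N = 0 ∨ MM m N < n)
    (x y : G m) :
    ((AC α n)⁻¹ * (∫ t in cyl m N y, ‖Phi m α n (x - t)‖ ∂μ) / Real.log (n + 1) ^ (1 + α)) ^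
      (1 / (1 + α)) ≤ CK B α * WW m (1 / (1 + α)) N y x := by
  have hl2 : 0 < Real.log 2 := Real.log_pos (by norm_num)
  have hp : 0 < 1 / (1 + α) := by positivity
  have hMp : ∀ n, (0 : ℝ) < MM m n := fun n => by exact_mod_cast MM_pos hm n
  have hn1' : (1 : ℝ) ≤ n := by exact_mod_cast hn1
  have hA : 0 < AC α n := by
    refine lt_of_lt_of_le ?_ (AC_lower h0 h1 hn1)
    positivity
  have hlog2 : Real.log 2 ≤ Real.log (n + 1) :=
    Real.log_le_log (by norm_num) (by linarith)
  have hlog : 0 < Real.log (n + 1) := hl2.trans_le hlog2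
  have hI0 : 0 ≤ ∫ t in cyl m N y, ‖Phi m α n (x - t)‖ ∂μ :=
    integral_nonneg fun _ => norm_nonneg _
  have hW := WW_nonneg (1 / (1 + α)) N y x
  have hB0 : (0 : ℝ) ≤ B := by positivity
  by_cases hx : x ∈ cyl m N y
  · have hle : ∫ t in cyl m N y, ‖Phi m α n (x - t)‖ ∂μ ≤
        AC α n * ((2 * B + 1) / Real.log 2 * Real.log (n + 1)) := by
      refine le_trans ?_ (kernel_log hm hB hμ h0 h1 hn1 x)
      exact setIntegral_le_integral (integrable_kernel hm μ α n x)
        (Eventually.of_forall fun _ => norm_nonneg _)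
    have hV : (AC α n)⁻¹ * (∫ t in cyl m N y, ‖Phi m α n (x - t)‖ ∂μ) /
        Real.log (n + 1) ^ (1 + α) ≤ (2 * B + 1) / Real.log 2 / Real.log 2 ^ α := by
      calc _ ≤ (AC α n)⁻¹ * (AC α n * ((2 * B + 1) / Real.log 2 * Real.log (n + 1))) /
            Real.log (n + 1) ^ (1 + α) := by gcongr
        _ = (2 * B + 1) / Real.log 2 / Real.log (n + 1) ^ α := by
            rw [Real.rpow_add hlog, Real.rpow_one]
            field_simp
        _ ≤ _ := by gcongr
    calc _ ≤ ((2 * B + 1) / Real.log 2 / Real.log 2 ^ α) ^ (1 / (1 + α)) := by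
          apply Real.rpow_le_rpow (by positivity) hV hp.le
      _ ≤ CK B α := by
          unfold CK
          exact le_add_of_nonneg_right (by positivity)
      _ ≤ CK B α * WW m (1 / (1 + α)) N y x :=
          le_mul_of_one_le_right (CK_nonneg B α) (WW_ge_cyl _ hx)
  · have hN : 1 ≤ N := by
      by_contra h
      have : N = 0 := by omega
      subst this
      exact hx fun j hj => absurd hj (Nat.not_lt_zero j)
    have hn' : MM m N < n := by
      rcases hn with h | h
      · omega
      · exact h
    obtain ⟨l, k, hlk, hkN, hE, hle⟩ := kernel_off hm hB hμ h0 h1 hn' hx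
    have hN0 : (0 : ℝ) < N := by exact_mod_cast hN
    have hlogN : N * Real.log 2 ≤ Real.log (n + 1) := by
      rw [← Real.log_pow]
      apply Real.log_le_log (by positivity)
      have := (two_pow_le_MM hm N).trans hn'.le
      have : (2 : ℝ) ^ N ≤ n := by exact_mod_cast this
      linarith
    have hk0 := hMp k
    have hl0 := hMp l
    have hM := hMp N
    have hV : (AC α n)⁻¹ * (∫ t in cyl m N y, ‖Phi m α n (x - t)‖ ∂μ) /
        Real.log (n + 1) ^ (1 + α) ≤ (2 * (1 + 2 * B) * B / Real.log 2 ^ (1 + α)) *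
          ((N * MM m N : ℝ) ^ (1 + α))⁻¹ * (MM m l * (MM m k : ℝ) ^ α) := by
      calc _ ≤ (AC α n)⁻¹ * (2 * (1 + 2 * B) * B * (MM m l * (MM m k : ℝ) ^ α) * AC α n *
          ((MM m N : ℝ) * (MM m N : ℝ) ^ α)⁻¹) / (N * Real.log 2) ^ (1 + α) := by gcongr
        _ = _ := by
            have e : (MM m N : ℝ) * (MM m N : ℝ) ^ α = (MM m N : ℝ) ^ (1 + α) := by
              rw [Real.rpow_add hM, Real.rpow_one]
            rw [e, Real.mul_rpow hN0.le hl2.le, Real.mul_rpow hN0.le hM.le]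
            have h3 : 0 < (MM m N : ℝ) ^ (1 + α) := by positivity
            have h4 : 0 < (N : ℝ) ^ (1 + α) := by positivity
            have h5 : 0 < Real.log 2 ^ (1 + α) := by positivity
            field_simp
    have hNM : (0 : ℝ) < N * MM m N := by positivity
    have h1a : (1 + α) ≠ 0 := by positivity
    calc _ ≤ ((2 * (1 + 2 * B) * B / Real.log 2 ^ (1 + α)) *
          ((N * MM m N : ℝ) ^ (1 + α))⁻¹ * (MM m l * (MM m k : ℝ) ^ α)) ^ (1 / (1 + α)) := by
          apply Real.rpow_le_rpow (by positivity) hV hp.le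
      _ = (2 * (1 + 2 * B) * B / Real.log 2 ^ (1 + α)) ^ (1 / (1 + α)) *
          ((N * MM m N : ℝ)⁻¹ *
            ((MM m l : ℝ) ^ (1 / (1 + α)) * (MM m k : ℝ) ^ (1 - 1 / (1 + α)))) := by
          rw [Real.mul_rpow (by positivity) (by positivity),
            Real.mul_rpow (by positivity) (by positivity),
            Real.mul_rpow hl0.le (by positivity), Real.inv_rpow (by positivity),
            ← Real.rpow_mul hNM.le, ← Real.rpow_mul hk0.le]
          have e1 : (1 + α) * (1 / (1 + α)) = 1 := by field_simp
          have e2 : α * (1 / (1 + α)) = 1 - 1 / (1 + α) := by field_simp; ring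
          rw [e1, e2, Real.rpow_one]
          ring
      _ ≤ CK B α * WW m (1 / (1 + α)) N y x := by
          refine mul_le_mul ?_ (WW_ge_EE _ hkN hlk hE) (by positivity) (CK_nonneg B α)
          unfold CK
          exact le_add_of_nonneg_left (by positivity)

end kernel2

/-! ### Part 7: assembly -/

section assembly
set_option linter.unusedSectionVars false
variable {m : ℕ → ℕ} [∀ n, NeZero (m n)]

lemma Dep.mul {J : ℕ} {g h : G m → ℂ} (hg : Dep J g) (hh : Dep J h) :
    Dep J fun t => g t * h t := by
  intro s t hst
  simp only [hg s t hst, hh s t hst]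

lemma mcoef_eq (hm : ∀ n, 2 ≤ m n) {μ : Measure (G m)} [IsProbabilityMeasure μ]
    {f : ℕ → G m → ℂ} (hf : IsMartingale m μ f) {i K : ℕ} (hi : i < MM m K) :
    mcoef m μ f i = ∫ x, f K x * (starRingEnd ℂ) (psi m i x) ∂μ := by
  have hd : Dep K fun x => (starRingEnd ℂ) (psi m i x) := by
    intro x y hxy
    simp only [dep_psi hm hi x y hxy]
  have key : ∀ k, K ≤ k → ∫ x, f k x * (starRingEnd ℂ) (psi m i x) ∂μ =
      ∫ x, f K x * (starRingEnd ℂ) (psi m i x) ∂μ := by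
    intro k hk
    induction k, hk using Nat.le_induction with
    | base => rfl
    | succ k hk ih =>
      rw [← ih]
      have h1 := hf.integral_diff (hd.mono hk)
      rw [← sub_eq_zero, ← integral_sub]
      · rw [← h1]
        congr 1
        funext x
        ring
      · exact ((hf.dep (k + 1)).mul (hd.mono (hk.trans (Nat.le_succ k)))).integrable μ
      · exact ((hf.dep k).mul (hd.mono hk)).integrable μ
  refine Tendsto.limUnder_eq ?_
  refine tendsto_const_nhds.congr' ?_
  filter_upwards [eventually_ge_atTop K] with k hk
  exact (key k hk).symm

lemma mCes_eq (hm : ∀ n, 2 ≤ m n) {μ : Measure (G m)} [IsProbabilityMeasure μ]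
    {f : ℕ → G m → ℂ} (hf : IsMartingale m μ f) (α : ℝ) {n K : ℕ} (hn : n ≤ MM m K) (x : G m) :
    mCes m α μ f n x = ((AC α n : ℝ) : ℂ)⁻¹ * ∫ t, f K t * Phi m α n (x - t) ∂μ := by
  unfold mCes
  congr 1
  have hdp : ∀ i < MM m K, Dep K fun t => f K t * psi m i (x - t) := fun i hi =>
    (hf.dep K).mul ((dep_psi hm hi).shift x)
  have e1 : ∀ t, f K t * Phi m α n (x - t) = ∑ k ∈ Icc 1 n, ((AC (α - 1) (n - k) : ℝ) : ℂ) *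
      ∑ i ∈ range k, f K t * psi m i (x - t) := by
    intro t
    unfold Phi D
    rw [mul_sum]
    refine sum_congr rfl fun k _ => ?_
    rw [← mul_sum]; ring
  simp only [e1]
  have hi1 : ∀ k ∈ Icc 1 n, ∀ i ∈ range k, i < MM m K := fun k hk i hi =>
    ((mem_range.mp hi).trans_le (mem_Icc.mp hk).2).trans_le hn
  rw [integral_finsetSum]
  · refine sum_congr rfl fun k hk => ?_
    rw [integral_const_mul, integral_finsetSum]
    · congr 1
      unfold mS
      refine sum_congr rfl fun i hi => ?_
      rw [mcoef_eq hm hf (hi1 k hk i hi), ← integral_mul_const]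
      congr 1
      funext t
      rw [psi_sub]; ring
    · intro i hi
      exact (hdp i (hi1 k hk i hi)).integrable μ
  · intro k hk
    refine Integrable.const_mul ?_ _
    refine integrable_finsetSum _ fun i hi => ?_
    exact (hdp i (hi1 k hk i hi)).integrable μ

lemma norm_integral_atm_le (hm : ∀ n, 2 ≤ m n) {μ : Measure (G m)} [IsProbabilityMeasure μ]
    {f : ℕ → G m → ℂ} (hf : IsMartingale m μ f) (α : ℝ) (n : ℕ) {N K : ℕ} (hN : N ≤ K)
    (x : G m) :
    ‖∫ t, atm f K N t * Phi m α n (x - t) ∂μ‖ ≤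
      ∑ y ∈ R m N, 4 * es f N y * ∫ t in cyl m N y, ‖Phi m α n (x - t)‖ ∂μ := by
  have hdP := (dep_Phi hm α (lt_MM hm n).le).shift x
  have hi : Integrable (fun t => atm f K N t * Phi m α n (x - t)) μ :=
    (((dep_atm hf.dep hN).mono (le_max_left K n)).mul
      (hdP.mono (le_max_right K n))).integrable μ
  rw [integral_cyl μ N hi]
  refine (norm_sum_le _ _).trans (sum_le_sum fun y _ => ?_)
  refine (norm_integral_le_integral_norm _).trans ?_
  rw [← integral_const_mul]
  refine setIntegral_mono_on hi.norm.integrableOn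
    ((integrable_kernel hm μ α n x).const_mul _).integrableOn (measurableSet_cyl N y) ?_
  intro t ht
  rw [norm_mul]
  refine mul_le_mul_of_nonneg_right ?_ (norm_nonneg _)
  rw [← dep_es hf.dep N t y ht]
  exact norm_atm_le_es f K N t

lemma sum_rpow_le {ι : Type*} (s : Finset ι) {g : ι → ℝ} (hg : ∀ i ∈ s, 0 ≤ g i) {p : ℝ}
    (hp : 0 < p) (hp1 : p ≤ 1) : (∑ i ∈ s, g i) ^ p ≤ ∑ i ∈ s, g i ^ p := by
  classical
  induction s using Finset.induction_on with
  | empty => simp [Real.zero_rpow hp.ne']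
  | insert a s ha ih =>
    rw [sum_insert ha, sum_insert ha]
    have h1 : 0 ≤ g a := hg a (mem_insert_self _ _)
    have h2 : ∀ i ∈ s, 0 ≤ g i := fun i hi => hg i (mem_insert_of_mem hi)
    exact (Real.rpow_add_le_add_rpow h1 (sum_nonneg h2) hp.le hp1).trans
      (add_le_add_right (ih h2) _)

/-- the majorant at level `N` -/
def UU (m : ℕ → ℕ) [∀ n, NeZero (m n)] (B : ℕ) (α : ℝ) (f : ℕ → G m → ℂ) (N : ℕ) (x : G m) : ℝ :=
  ∑ y ∈ R m N, (4 * es f N y) ^ (1 / (1 + α)) * (CK B α * WW m (1 / (1 + α)) N y x)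

lemma UU_nonneg (B : ℕ) (α : ℝ) (f : ℕ → G m → ℂ) (N : ℕ) (x : G m) :
    0 ≤ UU m B α f N x :=
  sum_nonneg fun y _ => mul_nonneg
    (Real.rpow_nonneg (mul_nonneg (by norm_num) (es_nonneg f N y)) _)
    (mul_nonneg (CK_nonneg B α) (WW_nonneg _ N y x))

lemma dep_UU (B : ℕ) (α : ℝ) (f : ℕ → G m → ℂ) (N : ℕ) : Dep N (UU m B α f N) := by
  intro x z hxz
  unfold UU
  refine sum_congr rfl fun y _ => ?_
  rw [dep_WW _ N y x z hxz]

lemma pointwise_bound (hm : ∀ n, 2 ≤ m n) {B : ℕ} (hB : ∀ n, m n ≤ B) {μ : Measure (G m)}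
    [IsProbabilityMeasure μ]
    (hμ : ∀ (n : ℕ) (x : G m), μ (cyl m n x) = ((MM m n : ℝ≥0∞))⁻¹)
    {α : ℝ} (h0 : 0 < α) (h1 : α < 1) {f : ℕ → G m → ℂ} (hf : IsMartingale m μ f)
    {n : ℕ} (hn : 1 ≤ n) (x : G m) :
    (‖mCes m α μ f n x‖ / Real.log (n + 1) ^ (1 + α)) ^ (1 / (1 + α)) ≤
      ∑ N ∈ range n, UU m B α f N x := by
  have hp : 0 < 1 / (1 + α) := by positivity
  have hp1 : 1 / (1 + α) ≤ 1 := by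
    rw [div_le_one (by positivity)]; linarith
  have hn1' : (1 : ℝ) ≤ n := by exact_mod_cast hn
  have hlog : 0 < Real.log (n + 1) := Real.log_pos (by linarith)
  have hL : 0 < Real.log (n + 1) ^ (1 + α) := by positivity
  have hA := AC_nonneg h0 h1 n
  have hnM := (lt_MM hm n).le
  have hdP := (dep_Phi hm α hnM).shift x
  have e : ∫ t, f n t * Phi m α n (x - t) ∂μ =
      ∑ N ∈ range n, ∫ t, atm f n N t * Phi m α n (x - t) ∂μ := by
    rw [← integral_finsetSum]
    · congr 1
      funext t
      rw [← sum_mul, sum_atm f hn]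
    · intro N hN
      exact ((dep_atm hf.dep (mem_range.mp hN).le).mul hdP).integrable μ
  have hv : ‖mCes m α μ f n x‖ / Real.log (n + 1) ^ (1 + α) ≤ ∑ N ∈ range n,
      (AC α n)⁻¹ * ‖∫ t, atm f n N t * Phi m α n (x - t) ∂μ‖ / Real.log (n + 1) ^ (1 + α) := by
    rw [mCes_eq hm hf α hnM, e, norm_mul, norm_inv, Complex.norm_real, Real.norm_of_nonneg hA,
      ← sum_div, ← mul_sum]
    gcongr
    exact norm_sum_le _ _
  refine (Real.rpow_le_rpow (by positivity) hv hp.le).trans ?_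
  refine (sum_rpow_le _ (fun N _ => by positivity) hp hp1).trans ?_
  refine sum_le_sum fun N hN => ?_
  have hNn := (mem_range.mp hN).le
  by_cases hc : N = 0 ∨ MM m N < n
  · calc _ ≤ (∑ y ∈ R m N, 4 * es f N y * ((AC α n)⁻¹ *
          (∫ t in cyl m N y, ‖Phi m α n (x - t)‖ ∂μ) / Real.log (n + 1) ^ (1 + α))) ^
            (1 / (1 + α)) := by
          apply Real.rpow_le_rpow (by positivity) _ hp.le
          calc _ ≤ (AC α n)⁻¹ * (∑ y ∈ R m N, 4 * es f N y *
                ∫ t in cyl m N y, ‖Phi m α n (x - t)‖ ∂μ) / Real.log (n + 1) ^ (1 + α) := by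
                gcongr
                exact norm_integral_atm_le hm hf α n hNn x
            _ = _ := by
                rw [mul_sum, sum_div]
                refine sum_congr rfl fun y _ => ?_
                ring
      _ ≤ _ := by
          have hI : ∀ y, 0 ≤ (AC α n)⁻¹ * (∫ t in cyl m N y, ‖Phi m α n (x - t)‖ ∂μ) /
              Real.log (n + 1) ^ (1 + α) := fun y =>
            div_nonneg (mul_nonneg (by positivity) (integral_nonneg fun _ => norm_nonneg _)) hL.le
          have hes : ∀ y, 0 ≤ 4 * es f N y := fun y =>
            mul_nonneg (by norm_num) (es_nonneg f N y)
          refine (sum_rpow_le _ (fun y _ => mul_nonneg (hes y) (hI y)) hp hp1).trans ?_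
          unfold UU
          refine sum_le_sum fun y _ => ?_
          rw [Real.mul_rpow (hes y) (hI y)]
          exact mul_le_mul_of_nonneg_left (kernel_bound hm hB hμ h0 h1 hn hc x y)
            (Real.rpow_nonneg (hes y) _)
  · push Not at hc
    have hz : ∫ t, atm f n N t * Phi m α n (x - t) ∂μ = 0 := by
      rw [← integral_atm hf n (Nat.one_le_iff_ne_zero.mpr hc.1)
        ((dep_Phi hm α hc.2).shift x)]
      congr 1
      funext t
      ring
    rw [hz, norm_zero, mul_zero, zero_div, Real.zero_rpow hp.ne']
    exact UU_nonneg B α f N x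

lemma av_UU_le (hm : ∀ n, 2 ≤ m n) {B : ℕ} (hB : ∀ n, m n ≤ B)
    {α : ℝ} (h0 : 0 < α) (f : ℕ → G m → ℂ) (N : ℕ) :
    av m N (UU m B α f N) ≤
      (4 ^ (1 / (1 + α)) * CK B α * (1 + 2 * (B * (1 - 2 ^ (-(1 / (1 + α))))⁻¹))) *
        av m N (fun x => es f N x ^ (1 / (1 + α))) := by
  have hp : 0 < 1 / (1 + α) := by positivity
  unfold UU
  rw [av_sum]
  simp only [av_const_mul]
  have e : av m N (fun x => es f N x ^ (1 / (1 + α))) =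
    ∑ y ∈ R m N, es f N y ^ (1 / (1 + α)) / MM m N := by unfold av; rw [sum_div]
  rw [e, mul_sum]
  refine sum_le_sum fun y _ => ?_
  have hes := es_nonneg f N y
  rw [Real.mul_rpow (by norm_num) hes]
  have hC := CK_nonneg B α
  calc _ ≤ (4 : ℝ) ^ (1 / (1 + α)) * es f N y ^ (1 / (1 + α)) *
        (CK B α * ((1 + 2 * (B * (1 - 2 ^ (-(1 / (1 + α))))⁻¹)) / MM m N)) := by
        gcongr
        exact av_WW_le hm hB hp N y
    _ = _ := by ring

end assembly

lemma ofReal_Fs_le {m : ℕ → ℕ} (f : ℕ → G m → ℂ) (n : ℕ) (x : G m) :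
    ENNReal.ofReal (Fs f n x) ≤ ⨆ n, (‖f n x‖₊ : ℝ≥0∞) := by
  have h : ∀ j, ENNReal.ofReal ‖f j x‖ ≤ ⨆ n, (‖f n x‖₊ : ℝ≥0∞) := fun j => by
    rw [ofReal_norm_eq_enorm]
    exact le_iSup (fun n => (‖f n x‖₊ : ℝ≥0∞)) j
  induction n with
  | zero => exact h 0
  | succ n ih =>
    simp only [Fs, ENNReal.ofReal_max]
    exact max_le ih (h _)

/-- Let `0 < α < 1`. Then there is a constant `c_α` such that for every
martingale `f ∈ H_{1/(1+α)}(G_m)`,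
`‖ sup_n |σ_n^α f| / log^{1+α}(n+1) ‖_{1/(1+α)} ≤ c_α ‖f‖_{H_{1/(1+α)}}`, where `σ_n^α` is the
`n`-th `(C,α)` Cesàro mean of the Vilenkin-Fourier series. -/
theorem statement2
    (m : ℕ → ℕ) (hm : ∀ n, 2 ≤ m n) (hmb : ∃ B, ∀ n, m n ≤ B)
    (μ : Measure (G m)) [IsProbabilityMeasure μ]
    (hμ : ∀ (n : ℕ) (x : G m), μ (cyl m n x) = ((MM m n : ℝ≥0∞))⁻¹)
    (α : ℝ) (hα0 : 0 < α) (hα1 : α < 1) :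
    ∃ c : ℝ≥0, ∀ f : ℕ → G m → ℂ, IsMartingale m μ f →
      HpNorm m μ (1 / (1 + α)) f < ⊤ →
      lpNormE m μ (1 / (1 + α))
          (fun x => ⨆ n : ℕ, (‖mCes m α μ f n x‖₊ : ℝ≥0∞) /
            ENNReal.ofReal (Real.log (n + 1) ^ (1 + α))) ≤
        (c : ℝ≥0∞) * HpNorm m μ (1 / (1 + α)) f := by
  obtain ⟨B, hB⟩ := hmb
  haveI : ∀ n, NeZero (m n) := fun n => ⟨by have := hm n; omega⟩
  have hp : 0 < 1 / (1 + α) := by positivity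
  set p := 1 / (1 + α) with hpdef
  set C1 : ℝ := 4 ^ p * CK B α * (1 + 2 * (B * (1 - 2 ^ (-p))⁻¹)) with hC1
  set C : ℝ := C1 * ((1 - 2 ^ (-p))⁻¹ * B) with hC
  have hq1 : (2 : ℝ) ^ (-p) < 1 := by
    apply Real.rpow_lt_one_of_one_lt_of_neg <;> linarith
  have hinv : 0 < (1 - (2 : ℝ) ^ (-p))⁻¹ := inv_pos.mpr (by linarith)
  have hCK := CK_nonneg B α
  have hC1n : 0 ≤ C1 := by positivity
  have hCn : 0 ≤ C := by positivity
  refine ⟨(C ^ (1 / p)).toNNReal, fun f hf _ => ?_⟩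
  unfold HpNorm lpNormE
  -- the majorant
  have hpt : ∀ x, (⨆ n : ℕ, (‖mCes m α μ f n x‖₊ : ℝ≥0∞) /
      ENNReal.ofReal (Real.log (n + 1) ^ (1 + α))) ^ p ≤
      ∑' N, ENNReal.ofReal (UU m B α f N x) := by
    intro x
    rw [← ENNReal.le_rpow_inv_iff hp]
    refine iSup_le fun n => ?_
    rw [ENNReal.le_rpow_inv_iff hp]
    rcases Nat.eq_zero_or_pos n with rfl | hn
    · have : mCes m α μ f 0 x = 0 := by simp [mCes]
      rw [this]
      simp [hp]
    · have hn1' : (1 : ℝ) ≤ n := by exact_mod_cast hn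
      have hlog : 0 < Real.log (n + 1) := Real.log_pos (by linarith)
      have hL : 0 < Real.log (n + 1) ^ (1 + α) := by positivity
      have e : (‖mCes m α μ f n x‖₊ : ℝ≥0∞) / ENNReal.ofReal (Real.log (n + 1) ^ (1 + α)) =
          ENNReal.ofReal (‖mCes m α μ f n x‖ / Real.log (n + 1) ^ (1 + α)) := by
        rw [ENNReal.ofReal_div_of_pos hL, ofReal_norm_eq_enorm]; rfl
      rw [e, ENNReal.ofReal_rpow_of_nonneg (by positivity) hp.le]
      refine (ENNReal.ofReal_le_ofReal (pointwise_bound hm hB hμ hα0 hα1 hf hn x)).trans ?_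
      rw [ENNReal.ofReal_sum_of_nonneg (fun N _ => UU_nonneg B α f N x)]
      exact ENNReal.sum_le_tsum _
  have hItg : ∫⁻ x, (⨆ n : ℕ, (‖mCes m α μ f n x‖₊ : ℝ≥0∞) /
      ENNReal.ofReal (Real.log (n + 1) ^ (1 + α))) ^ p ∂μ ≤
      ENNReal.ofReal C * ∫⁻ x, (⨆ n, (‖f n x‖₊ : ℝ≥0∞)) ^ p ∂μ := by
    refine (lintegral_mono hpt).trans ?_
    rw [lintegral_tsum fun N => (dep_UU B α f N).measurable.ennreal_ofReal.aemeasurable]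
    rw [ENNReal.tsum_eq_iSup_nat]
    refine iSup_le fun K => ?_
    have hU : ∀ N, ∫⁻ x, ENNReal.ofReal (UU m B α f N x) ∂μ =
        ENNReal.ofReal (av m N (UU m B α f N)) := fun N =>
      lintegral_dep hm hμ (dep_UU B α f N) (UU_nonneg B α f N)
    simp only [hU]
    rw [← ENNReal.ofReal_sum_of_nonneg (fun N _ => av_nonneg (UU_nonneg B α f N))]
    have hs : ∑ N ∈ Finset.range K, av m N (UU m B α f N) ≤
        C * av m K (fun x => Fs f K x ^ p) := by
      calc _ ≤ ∑ N ∈ Finset.range K, C1 * av m N (fun x => es f N x ^ p) :=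
            Finset.sum_le_sum fun N _ => av_UU_le hm hB hα0 f N
        _ = C1 * ∑ N ∈ Finset.range K, av m N (fun x => es f N x ^ p) := by
            rw [Finset.mul_sum]
        _ ≤ C1 * ((1 - 2 ^ (-p))⁻¹ * (B * av m K (fun x => Fs f K x ^ p))) :=
            mul_le_mul_of_nonneg_left (sum_av_es_le hf.dep hB hp K) hC1n
        _ = _ := by rw [hC]; ring
    refine (ENNReal.ofReal_le_ofReal hs).trans ?_
    rw [ENNReal.ofReal_mul hCn]
    refine mul_le_mul_right ?_ _
    have hdF : Dep K fun x => Fs f K x ^ p := by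
      intro x y hxy
      simp only [dep_Fs hf.dep K x y hxy]
    rw [← lintegral_dep hm hμ hdF (fun x => Real.rpow_nonneg (Fs_nonneg f K x) _)]
    refine lintegral_mono fun x => ?_
    rw [← ENNReal.ofReal_rpow_of_nonneg (Fs_nonneg f K x) hp.le]
    exact ENNReal.rpow_le_rpow (ofReal_Fs_le f K x) hp.le
  refine (ENNReal.rpow_le_rpow hItg (by positivity)).trans (le_of_eq ?_)
  rw [ENNReal.mul_rpow_of_nonneg _ _ (by positivity),
    ENNReal.ofReal_rpow_of_nonneg hCn (by positivity)]
  rfl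

end Vilenkin
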